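/- arXiv:0908.1159 — 3 statements merged into one kernel-verified Lean document; each statement's English description precedes it below -/
import Mathlib

section
/- BB(2) = 4: among all Turing machines with at most 2 states (in the model without a separate halting state) that halt on the all-zero tape, the maximum number of 1s in the computed word is exactly 4. -/
/-- Head movement directions. -/
inductive Dir : Type
  | left | stay | right

/-- Displacement of the head for each direction. -/
def Dir.move : Dir → ℤ
  | .left => -1
  | .stay => 0
  | .right => 1

/-- A configuration of a Turing machine with state type `Q`: current state,
head position and the two-way infinite binary tape. -/
structure Cfg (Q : Type) where
  state : Q
  head : ℤ
  tape : ℤ → Bool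

/-- One step of the machine with partial transition function `f`
(`none` if the machine halts, i.e. `f` is undefined on the current pair). -/
def stepTM {Q : Type} (f : Q × Bool → Option (Q × Bool × Dir)) (c : Cfg Q) :
    Option (Cfg Q) :=
  (f (c.state, c.tape c.head)).map fun qbd =>
    ⟨qbd.1, c.head + qbd.2.2.move, Function.update c.tape c.head qbd.2.1⟩

/-- Running `t` steps (returns `none` if the machine halts strictly before `t` steps). -/
def stepsTM {Q : Type} (f : Q × Bool → Option (Q × Bool × Dir)) :
    ℕ → Cfg Q → Option (Cfg Q)
  | 0, c => some c
  | t + 1, c => (stepTM f c).bind (stepsTM f t)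

/-- Initial configuration: initial state `q0`, head at `0`, all-zero tape. -/
def initCfg {Q : Type} (q0 : Q) : Cfg Q := ⟨q0, 0, fun _ => false⟩

/-- The machine is halted in configuration `c`: the transition function is
undefined on the current (state, symbol) pair. -/
def Halted {Q : Type} (f : Q × Bool → Option (Q × Bool × Dir)) (c : Cfg Q) : Prop :=
  f (c.state, c.tape c.head) = none

/-- `w` is the tape contents from the leftmost 1 to the rightmost 1
(the empty word if the tape contains no 1). -/
def TapeWord (tape : ℤ → Bool) (w : List Bool) : Prop :=
  ∃ i : ℤ,
    (∀ k : ℕ, k < w.length → w.getD k false = tape (i + k)) ∧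
    (∀ j : ℤ, tape j = true → i ≤ j ∧ j < i + w.length) ∧
    (w ≠ [] → w.getD 0 false = true ∧ w.getLastD false = true)

/-- The machine with transition function `f` and initial state `q0`, started on
the all-zero tape, halts after exactly `t` steps computing the word `w`. -/
def Computes {Q : Type} (f : Q × Bool → Option (Q × Bool × Dir)) (q0 : Q)
    (w : List Bool) (t : ℕ) : Prop :=
  ∃ c : Cfg Q, stepsTM f t (initCfg q0) = some c ∧ Halted f c ∧ TapeWord c.tape w

namespace BB2

/-- Transition table (partial knowledge of a machine). -/
abbrev Tab := Fin 2 × Bool → Option (Fin 2 × Bool × Dir)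

/-- Local context: state, symbol, two symbols to the left, two to the right (nearest first). -/
abbrev Ctx := Fin 2 × Bool × Bool × Bool × Bool × Bool

/-- `f` extends the partial table `p`. -/
def Ext (p f : Tab) : Prop := ∀ k v, p k = some v → f k = some v

/-! ### The closed-set decider -/

/-- Successors of one context. -/
def closedAt (p : Tab) (S : List Ctx) (LS RS : List (Bool × Bool)) : Ctx → Bool
  | (q, s, l1, l2, r1, r2) =>
    match p (q, s) with
    | none => false
    | some (q2, w, .stay) => S.contains (q2, w, l1, l2, r1, r2)
    | some (q2, w, .right) => LS.contains (w, l1) &&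
        [true, false].all fun b => !RS.contains (r2, b) || S.contains (q2, r1, w, l1, r2, b)
    | some (q2, w, .left) => RS.contains (w, r1) &&
        [true, false].all fun b => !LS.contains (l2, b) || S.contains (q2, l1, l2, b, w, r1)

/-- The sets contain the initial configuration and are closed under steps. -/
def closed (p : Tab) (S : List Ctx) (LS RS : List (Bool × Bool)) : Bool :=
  S.contains (0, false, false, false, false, false) &&
  (LS.contains (false, false) && (RS.contains (false, false) && S.all (closedAt p S LS RS)))

/-- One round of saturation. -/
def grow (p : Tab) : List Ctx → List Ctx → List (Bool × Bool) → List (Bool × Bool) →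
    List Ctx × List (Bool × Bool) × List (Bool × Bool)
  | [], S, LS, RS => (S, LS, RS)
  | (q, s, l1, l2, r1, r2) :: T, S, LS, RS =>
    match p (q, s) with
    | none => (S, LS, RS)
    | some (q2, w, .stay) => grow p T (S.insert (q2, w, l1, l2, r1, r2)) LS RS
    | some (q2, w, .right) =>
        grow p T ([true, false].foldl (fun S b =>
          if RS.contains (r2, b) then S.insert (q2, r1, w, l1, r2, b) else S) S)
          (LS.insert (w, l1)) RS
    | some (q2, w, .left) =>
        grow p T ([true, false].foldl (fun S b =>
          if LS.contains (l2, b) then S.insert (q2, l1, l2, b, w, r1) else S) S)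
          LS (RS.insert (w, r1))

/-- Saturate until closed. -/
def cps (p : Tab) : ℕ → List Ctx → List (Bool × Bool) → List (Bool × Bool) → Bool
  | 0, _, _, _ => false
  | n + 1, S, LS, RS => closed p S LS RS ||
      match grow p S S LS RS with
      | (S2, LS2, RS2) => cps p n S2 LS2 RS2

/-- The invariant attached to the sets. -/
def Inv (S : List Ctx) (LS RS : List (Bool × Bool)) (c : Cfg (Fin 2)) : Prop :=
  (c.state, c.tape c.head, c.tape (c.head - 1), c.tape (c.head - 2),
    c.tape (c.head + 1), c.tape (c.head + 2)) ∈ S ∧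
  (∀ j : ℤ, j < c.head → (c.tape j, c.tape (j - 1)) ∈ LS) ∧
  (∀ j : ℤ, c.head < j → (c.tape j, c.tape (j + 1)) ∈ RS)

theorem inv_step {p f : Tab} (hE : Ext p f) {S LS RS} (hc : closed p S LS RS = true)
    {c : Cfg (Fin 2)} (h : Inv S LS RS c) : ∃ c', stepTM f c = some c' ∧ Inv S LS RS c' := by
  obtain ⟨q, x, T⟩ := c
  obtain ⟨h1, h2, h3⟩ := h
  simp only at h1 h2 h3
  simp only [closed, Bool.and_eq_true, List.all_eq_true] at hc
  have hcl := hc.2.2.2 _ h1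
  simp only [closedAt] at hcl
  split at hcl
  · cases hcl
  · rename_i q2 w hp
    have hf := hE _ _ hp
    refine ⟨⟨q2, x + 0, Function.update T x w⟩, by simp [stepTM, hf, Dir.move], ?_, ?_, ?_⟩
    · simpa [Function.update_apply] using hcl
    · intro j hj
      have hj : j < x := by simpa using hj
      have := h2 j hj
      simpa [Function.update_apply, show j ≠ x by omega, show j - 1 ≠ x by omega] using this
    · intro j hj
      have hj : x < j := by simpa using hj
      have := h3 j hj
      simpa [Function.update_apply, show j ≠ x by omega, show j + 1 ≠ x by omega] using this
  · rename_i q2 w hp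
    have hf := hE _ _ hp
    simp only [Bool.and_eq_true, List.all_eq_true] at hcl
    obtain ⟨ha, hb⟩ := hcl
    refine ⟨⟨q2, x + 1, Function.update T x w⟩, by simp [stepTM, hf, Dir.move], ?_, ?_, ?_⟩
    · have := hb (T (x + 3)) (by cases T (x + 3) <;> simp)
      have h5 := h3 (x + 2) (by omega)
      rw [show x + 2 + 1 = x + 3 by ring] at h5
      simp only [List.contains_iff_mem, Bool.or_eq_true, Bool.not_eq_true'] at this
      have e : List.contains RS (T (x + 2), T (x + 3)) = true := by simpa using h5
      rw [e] at this
      simp only [Bool.true_eq_false, false_or] at this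
      simpa [Function.update_apply, show x + 1 - 2 = x - 1 by ring,
        show x + 1 + 1 = x + 2 by ring, show x + 1 + 2 = x + 3 by ring] using this
    · intro j hj
      have hj : j < x + 1 := hj
      rcases eq_or_ne j x with rfl | hne
      · simpa [Function.update_apply] using ha
      · have := h2 j (by omega)
        simpa [Function.update_apply, hne, show j - 1 ≠ x by omega] using this
    · intro j hj
      have hj : x + 1 < j := hj
      have := h3 j (by omega)
      simpa [Function.update_apply, show j ≠ x by omega, show j + 1 ≠ x by omega] using this
  · rename_i q2 w hp
    have hf := hE _ _ hp
    simp only [Bool.and_eq_true, List.all_eq_true] at hcl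
    obtain ⟨ha, hb⟩ := hcl
    refine ⟨⟨q2, x - 1, Function.update T x w⟩,
      by simp [stepTM, hf, Dir.move, sub_eq_add_neg], ?_, ?_, ?_⟩
    · have := hb (T (x - 3)) (by cases T (x - 3) <;> simp)
      have h5 := h2 (x - 2) (by omega)
      rw [show x - 2 - 1 = x - 3 by ring] at h5
      have e : List.contains LS (T (x - 2), T (x - 3)) = true := by simpa using h5
      rw [e] at this
      simp only [Bool.not_true, Bool.false_or] at this
      simpa [Function.update_apply, show x - 1 + 2 = x + 1 by ring,
        show x - 1 - 1 = x - 2 by ring, show x - 1 - 2 = x - 3 by ring] using this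
    · intro j hj
      have hj : j < x - 1 := hj
      have := h2 j (by omega)
      simpa [Function.update_apply, show j ≠ x by omega, show j - 1 ≠ x by omega] using this
    · intro j hj
      have hj : x - 1 < j := hj
      rcases eq_or_ne j x with rfl | hne
      · simpa [Function.update_apply] using ha
      · have := h3 j (by omega)
        simpa [Function.update_apply, hne, show j + 1 ≠ x by omega] using this

theorem closed_steps {p f : Tab} (hE : Ext p f) {S LS RS} (hc : closed p S LS RS = true)
    (t : ℕ) : ∀ c c', Inv S LS RS c → stepsTM f t c = some c' → Inv S LS RS c' := by
  induction t with
  | zero => intro c c' h e; simp only [stepsTM, Option.some.injEq] at e; exact e ▸ h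
  | succ t ih =>
    intro c c' h e
    obtain ⟨d, hd, hi⟩ := inv_step hE hc h
    simp only [stepsTM, hd, Option.bind_some] at e
    exact ih d c' hi e

theorem closed_sound {p f : Tab} (hE : Ext p f) {S LS RS} (hc : closed p S LS RS = true)
    (t : ℕ) (c : Cfg (Fin 2)) (e : stepsTM f t (initCfg 0) = some c) : ¬ Halted f c := by
  intro hh
  have h0 : Inv S LS RS (initCfg 0) := by
    simp only [closed, Bool.and_eq_true, List.contains_iff_mem] at hc
    exact ⟨hc.1, fun _ _ => hc.2.1, fun _ _ => hc.2.2.1⟩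
  obtain ⟨d, hd, -⟩ := inv_step hE hc (closed_steps hE hc t _ _ h0 e)
  unfold Halted at hh
  simp [stepTM, hh] at hd

theorem cps_sound {p f : Tab} (hE : Ext p f) (n : ℕ) : ∀ S LS RS, cps p n S LS RS = true →
    ∀ t c, stepsTM f t (initCfg 0) = some c → ¬ Halted f c := by
  induction n with
  | zero => intro S LS RS h; cases h
  | succ n ih =>
    intro S LS RS h
    simp only [cps, Bool.or_eq_true] at h
    rcases h with h | h
    · exact closed_sound hE h
    · exact ih _ _ _ h

/-! ### The search -/

/-- All possible transitions. -/
def allTr : List (Fin 2 × Bool × Dir) :=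
  [(0, false, .left), (0, false, .stay), (0, false, .right),
   (0, true, .left), (0, true, .stay), (0, true, .right),
   (1, false, .left), (1, false, .stay), (1, false, .right),
   (1, true, .left), (1, true, .stay), (1, true, .right)]

theorem mem_allTr (t : Fin 2 × Bool × Dir) : t ∈ allTr := by
  obtain ⟨q, b, d⟩ := t
  fin_cases q <;> cases b <;> cases d <;> simp [allTr]

/-- The table is total. -/
def total (p : Tab) : Bool :=
  (p (0, false)).isSome && ((p (0, true)).isSome && ((p (1, false)).isSome && (p (1, true)).isSome))

/-- Extend a table at one entry. -/
def upd (p : Tab) (k : Fin 2 × Bool) (t : Fin 2 × Bool × Dir) : Tab :=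
  fun x => if x = k then some t else p x

/-- Write a symbol on a tape given by the list of positions of its ones. -/
def write (l : List ℤ) (h : ℤ) : Bool → List ℤ
  | true => if l.contains h then l else h :: l
  | false => l.filter (fun j => !(j == h))

theorem write_spec (l : List ℤ) (h : ℤ) (w : Bool) (j : ℤ) :
    (write l h w).contains j = Function.update (fun j => l.contains j) h w j := by
  rw [Bool.eq_iff_iff]
  cases w <;> simp only [write, Function.update_apply]
  · by_cases e : j = h <;> simp [e]
  · by_cases e : j = h <;> by_cases m : h ∈ l <;> simp [e, m]

/-- Lazy enumeration of all machines. -/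
def search : ℕ → Tab → Fin 2 → ℤ → List ℤ → Bool
  | 0, p, _, _, _ => cps p 12 [(0, false, false, false, false, false)] [(false, false)]
      [(false, false)]
  | n + 1, p, q, h, l => total p ||
      match p (q, l.contains h) with
      | some (q2, w, d) => search n p q2 (h + d.move) (write l h w)
      | none => Nat.ble l.length 4 &&
          allTr.all fun t => search n (upd p (q, l.contains h) t) q h l

/-- What we want to know about a machine. -/
def Good (f : Tab) : Prop := ∀ t c, stepsTM f t (initCfg 0) = some c → Halted f c →
  ∃ l : List ℤ, l.length ≤ 4 ∧ ∀ j, c.tape j = true → j ∈ l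

theorem steps_succ {f : Tab} (t : ℕ) : ∀ {c0 c c' : Cfg (Fin 2)}, stepsTM f t c0 = some c →
    stepTM f c = some c' → stepsTM f (t + 1) c0 = some c' := by
  induction t with
  | zero =>
    intro c0 c c' h e
    simp only [stepsTM, Option.some.injEq] at h
    subst h
    simp [stepsTM, e]
  | succ t ih =>
    intro c0 c c' h e
    rw [stepsTM] at h ⊢
    cases hs : stepTM f c0 with
    | none => simp [hs] at h
    | some d =>
      simp only [hs, Option.bind_some] at h ⊢
      exact ih h e

theorem halt_unique {f : Tab} (t : ℕ) : ∀ (t' : ℕ) {c0 c c' : Cfg (Fin 2)},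
    stepsTM f t c0 = some c → Halted f c → stepsTM f t' c0 = some c' → Halted f c' → c = c' := by
  induction t with
  | zero =>
    intro t' c0 c c' h hh h' hh'
    simp only [stepsTM, Option.some.injEq] at h
    subst h
    cases t' with
    | zero => simpa [stepsTM] using h'
    | succ t' =>
      unfold Halted at hh
      simp [stepsTM, stepTM, hh] at h'
  | succ t ih =>
    intro t' c0 c c' h hh h' hh'
    cases t' with
    | zero =>
      simp only [stepsTM, Option.some.injEq] at h'
      subst h'
      unfold Halted at hh'
      simp [stepsTM, stepTM, hh'] at h
    | succ t' =>
      rw [stepsTM] at h h'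
      cases hs : stepTM f c0 with
      | none => simp [hs] at h
      | some d =>
        simp only [hs, Option.bind_some] at h h'
        exact ih t' h hh h' hh'

theorem total_good {p f : Tab} (hE : Ext p f) (h : total p = true) : Good f := by
  intro t c _ hh
  exfalso
  simp only [total, Bool.and_eq_true, Option.isSome_iff_exists] at h
  obtain ⟨⟨a, ha⟩, ⟨b, hb⟩, ⟨d, hd⟩, ⟨e, he⟩⟩ := h
  unfold Halted at hh
  revert hh
  generalize c.state = q
  generalize c.tape c.head = s
  fin_cases q <;> cases s <;> simp [hE _ _ ha, hE _ _ hb, hE _ _ hd, hE _ _ he]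

theorem search_sound {f : Tab} (n : ℕ) : ∀ (p : Tab) (q : Fin 2) (h : ℤ) (l : List ℤ),
    search n p q h l = true → Ext p f →
    ∀ t, stepsTM f t (initCfg 0) = some ⟨q, h, fun j => l.contains j⟩ → Good f := by
  induction n with
  | zero =>
    intro p q h l hs hE t _ t' c' e hh
    exact absurd hh (cps_sound hE _ _ _ _ hs t' c' e)
  | succ n ih =>
    intro p q h l hs hE t ht
    simp only [search, Bool.or_eq_true] at hs
    rcases hs with hs | hs
    · exact total_good hE hs
    split at hs
    · rename_i q2 w d hp
      refine ih _ _ _ _ hs hE (t + 1) (steps_succ t ht ?_)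
      have := hE _ _ hp
      simp only [stepTM, this, Option.map_some, Option.some.injEq, Cfg.mk.injEq, true_and]
      funext j
      exact (write_spec l h w j).symm
    · rename_i hp
      simp only [Bool.and_eq_true, List.all_eq_true] at hs
      obtain ⟨hl, hs⟩ := hs
      cases hf : f (q, l.contains h) with
      | none =>
        intro t' c' e hh
        have := halt_unique t t' ht hf e hh
        subst this
        exact ⟨l, Nat.le_of_ble_eq_true hl, fun j hj => by simpa using hj⟩
      | some v =>
        refine ih _ _ _ _ (hs v (mem_allTr v)) ?_ t ht
        intro k u hk
        unfold upd at hk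
        split at hk
        · rename_i hkk
          rw [hkk, hf, hk]
        · exact hE _ _ hk

theorem search_ok : search 10 (fun _ => none) 0 0 [] = true := by
  decide +kernel

theorem all_good (f : Tab) : Good f := by
  refine search_sound 10 _ 0 0 [] search_ok (fun k v h => by cases h) 0 ?_
  simp [stepsTM, initCfg]

theorem count_le (w : List Bool) : ∀ (i : ℤ) (l : List ℤ),
    (∀ k : ℕ, k < w.length → w.getD k false = true → i + k ∈ l) → w.count true ≤ l.length := by
  induction w with
  | nil => intro i l _; simp
  | cons b w ih =>
    intro i l h
    cases b with
    | false =>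
      have := ih (i + 1) l (fun k hk e => by
        have := h (k + 1) (by simpa using hk) (by simpa using e)
        push_cast at this
        rwa [show i + 1 + (k : ℤ) = i + (k + 1) by ring])
      simpa using this
    | true =>
      have hi : i ∈ l := by simpa using h 0 (by simp) (by simp)
      have := ih (i + 1) (l.erase i) (fun k hk e => by
        have := h (k + 1) (by simpa using hk) (by simpa using e)
        push_cast at this
        rw [show i + 1 + (k : ℤ) = i + (k + 1) by ring]
        exact (List.mem_erase_of_ne (by omega)).2 this)
      rw [List.length_erase_of_mem hi] at this
      have hp : 0 < l.length := List.length_pos_of_mem hi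
      simp only [List.count_cons_self]
      omega

/-- The champion. -/
def champ : Tab
  | (0, false) => some (1, true, .right)
  | (0, true) => some (1, true, .left)
  | (1, false) => some (0, true, .left)
  | (1, true) => none

theorem champ_computes : Computes champ 0 [true, true, true, true] 5 := by
  refine ⟨_, rfl, rfl, -2, ?_, ?_, ?_⟩
  · intro k hk
    have hk : k < 4 := hk
    interval_cases k <;> rfl
  · intro j hj
    by_contra hcon
    have : j ≠ -2 ∧ j ≠ -1 ∧ j ≠ 0 ∧ j ≠ 1 := by
      simp only [List.length_cons, List.length_nil] at hcon
      omega
    obtain ⟨a, b, d, e⟩ := this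
    simp [Dir.move, initCfg, a, b, d, e] at hj
  · intro _
    simp

end BB2

theorem busy_beaver_2 :
    IsGreatest
      {m : ℕ |
        ∃ (f : Fin 2 × Bool → Option (Fin 2 × Bool × Dir)) (w : List Bool) (t : ℕ),
          Computes f 0 w t ∧ w.count true = m} 4 := by
  refine ⟨⟨BB2.champ, _, _, BB2.champ_computes, rfl⟩, ?_⟩
  rintro m ⟨f, w, t, ⟨c, hc, hh, i, h1, -, -⟩, rfl⟩
  obtain ⟨l, hl, hj⟩ := BB2.all_good f t c hc hh
  exact (BB2.count_le w i l fun k hk e => hj _ ((h1 k hk).symm.trans e)).trans hl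
end

section
/- BB(3) = 6: among all Turing machines with at most 3 states (in the model without a separate halting state) that halt on the all-zero tape, the maximum number of 1s in the computed word is exactly 6. -/
namespace BB3

/-- The three states. -/
inductive St : Type
  | A | B | C

/-- A moving transition: target state, written symbol, direction (`true` is right). -/
structure Tr where
  st : St
  wr : Bool
  dr : Bool

/-- Partial transition tables. -/
structure Tbl where
  a0 : Option Tr
  a1 : Option Tr
  b0 : Option Tr
  b1 : Option Tr
  c0 : Option Tr
  c1 : Option Tr

def get (T : Tbl) (q : St) (s : Bool) : Option Tr :=
  match T with
  | ⟨a0, a1, b0, b1, c0, c1⟩ =>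
    match q with
    | .A => match s with
      | false => a0
      | true => a1
    | .B => match s with
      | false => b0
      | true => b1
    | .C => match s with
      | false => c0
      | true => c1

def set (T : Tbl) (q : St) (s : Bool) (t : Tr) : Tbl :=
  match T with
  | ⟨a0, a1, b0, b1, c0, c1⟩ =>
    match q with
    | .A => match s with
      | false => ⟨some t, a1, b0, b1, c0, c1⟩
      | true => ⟨a0, some t, b0, b1, c0, c1⟩
    | .B => match s with
      | false => ⟨a0, a1, some t, b1, c0, c1⟩
      | true => ⟨a0, a1, b0, some t, c0, c1⟩
    | .C => match s with
      | false => ⟨a0, a1, b0, b1, some t, c1⟩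
      | true => ⟨a0, a1, b0, b1, c0, some t⟩

def full (T : Tbl) : Bool :=
  match T with
  | ⟨some _, some _, some _, some _, some _, some _⟩ => true
  | _ => false

/-- Moving on a tape given by two half-tapes. -/
def mv (L R : List Bool) (w d : Bool) : List Bool × Bool × List Bool :=
  match d with
  | true => match R with
    | [] => (w :: L, false, [])
    | x :: R' => (w :: L, x, R')
  | false => match L with
    | [] => ([], false, w :: R)
    | x :: L' => (L', x, w :: R)

def ones : List Bool → ℕ
  | [] => 0
  | false :: l => ones l
  | true :: l => Nat.succ (ones l)

/-! ### The abstract decider -/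

/-- Abstract configurations. -/
structure Node where
  q : St
  s : Bool
  a : ℕ
  b : ℕ

/-- Automaton edges: source, read symbol, target. -/
structure Edge where
  x : Bool
  src : ℕ
  tgt : ℕ

def force (n : ℕ) (k : ℕ → Bool) : Bool :=
  Nat.casesOn n (k 0) (fun m => k (Nat.succ m))

/-- Automaton step, the automaton being coded in the octal digits of `d`. -/
def dstep (d a : ℕ) (x : Bool) : ℕ :=
  match x with
  | false => Nat.mod (Nat.shiftRight d (Nat.mul 6 a)) 8
  | true => Nat.mod (Nat.shiftRight d (Nat.add (Nat.mul 6 a) 3)) 8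

def code (q : St) (s : Bool) (a b : ℕ) : ℕ :=
  match q with
  | .A => match s with
    | false => Nat.add (Nat.mul 8 a) b
    | true => Nat.add (Nat.add (Nat.mul 8 a) b) 64
  | .B => match s with
    | false => Nat.add (Nat.add (Nat.mul 8 a) b) 128
    | true => Nat.add (Nat.add (Nat.mul 8 a) b) 192
  | .C => match s with
    | false => Nat.add (Nat.add (Nat.mul 8 a) b) 256
    | true => Nat.add (Nat.add (Nat.mul 8 a) b) 320

def memV (V k : ℕ) : Bool :=
  Nat.beq (Nat.mod (Nat.shiftRight V k) 2) 1

def insV (V k : ℕ) : ℕ := Nat.lor V (Nat.shiftLeft 1 k)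

def beqB (x y : Bool) : Bool :=
  match x with
  | true => y
  | false => match y with
    | true => false
    | false => true

def memE (x : Bool) (a : ℕ) : List Edge → Bool
  | [] => false
  | ⟨x', a', _⟩ :: E => cond (Nat.beq a a') (cond (beqB x x') true (memE x a E)) (memE x a E)

/-- Add the successors after a right move. -/
def exR (q : St) (a b : ℕ) (k : List Node → ℕ → Bool) :
    List Edge → List Node → ℕ → Bool
  | [], W, V => k W V
  | ⟨x, b', t⟩ :: E, W, V =>
    cond (Nat.beq t b)
      (cond (memV V (code q x a b')) (exR q a b k E W V)
        (force (insV V (code q x a b')) fun V' => exR q a b k E (⟨q, x, a, b'⟩ :: W) V'))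
      (exR q a b k E W V)

/-- Add the successors after a left move. -/
def exL (q : St) (a b : ℕ) (k : List Node → ℕ → Bool) :
    List Edge → List Node → ℕ → Bool
  | [], W, V => k W V
  | ⟨x, a', t⟩ :: E, W, V =>
    cond (Nat.beq t a)
      (cond (memV V (code q x a' b)) (exL q a b k E W V)
        (force (insV V (code q x a' b)) fun V' => exL q a b k E (⟨q, x, a', b⟩ :: W) V'))
      (exL q a b k E W V)

/-- Closure computation. -/
def loop (dl dr : ℕ) (T : Tbl) : ℕ → List Node → List Node → ℕ → List Edge → List Edge → Bool
  | 0, _, _, _, _, _ => false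
  | n + 1, W, P, V, EL, ER =>
    match W with
    | [] => true
    | ⟨q, s, a, b⟩ :: W' =>
      match get T q s with
      | none => false
      | some ⟨q', w, true⟩ =>
        force (dstep dl a w) fun a2 =>
          cond (memE w a EL)
            (exR q' a2 b (fun W'' V'' => loop dl dr T n W'' (⟨q, s, a, b⟩ :: P) V'' EL ER) ER W' V)
            (loop dl dr T n (⟨q, s, a, b⟩ :: (W' ++ P)) [] V (⟨w, a, a2⟩ :: EL) ER)
      | some ⟨q', w, false⟩ =>
        force (dstep dr b w) fun b2 =>
          cond (memE w b ER)
            (exL q' a b2 (fun W'' V'' => loop dl dr T n W'' (⟨q, s, a, b⟩ :: P) V'' EL ER) EL W' V)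
            (loop dl dr T n (⟨q, s, a, b⟩ :: (W' ++ P)) [] V EL (⟨w, b, b2⟩ :: ER))

/-- Run an automaton over a half-tape, collecting the edges. -/
def collect (d : ℕ) (k : ℕ → List Edge → Bool) : List Bool → Bool
  | [] => k 0 [⟨false, 0, 0⟩]
  | x :: l => collect d (fun a E => force (dstep d a x) fun a2 =>
      cond (memE x a E) (k a2 E) (k a2 (⟨x, a, a2⟩ :: E))) l

def tryD (dl dr : ℕ) (T : Tbl) (q : St) (L : List Bool) (s : Bool) (R : List Bool) : Bool :=
  collect dl (fun a EL => collect dr (fun b ER =>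
    force (insV 0 (code q s a b)) fun V => loop dl dr T 5000 [⟨q, s, a, b⟩] [] V EL ER) R) L

def decider (T : Tbl) (q : St) (L : List Bool) (s : Bool) (R : List Bool) : Bool :=
  cond (tryD 0 0 T q L s R) true
  (cond (tryD 520 520 T q L s R) true
  (cond (tryD 6850184 6850184 T q L s R) true
  (cond (tryD 275730608604808 275730608604808 T q L s R) true
  (cond (tryD 72 2725512 T q L s R) true
  (tryD 37000 8 T q L s R)))))

def allTr : List Tr :=
  [⟨.A, false, false⟩, ⟨.A, false, true⟩, ⟨.A, true, false⟩, ⟨.A, true, true⟩,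
   ⟨.B, false, false⟩, ⟨.B, false, true⟩, ⟨.B, true, false⟩, ⟨.B, true, true⟩,
   ⟨.C, false, false⟩, ⟨.C, false, true⟩, ⟨.C, true, false⟩, ⟨.C, true, true⟩]

def allB (p : Tr → Bool) : List Tr → Bool
  | [] => true
  | t :: l => cond (p t) (allB p l) false

/-- The search over all extensions of a partial table. -/
def search : ℕ → Tbl → St → List Bool → Bool → List Bool → Bool
  | 0, T, q, L, s, R => decider T q L s R
  | n + 1, T, q, L, s, R =>
    match get T q s with
    | some ⟨q', w, d⟩ =>
      match mv L R w d with
      | (L', s', R') => search n T q' L' s' R'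
    | none =>
      cond (Nat.ble (Nat.add (ones L) (ones R)) 5)
        (cond (full (set T q s ⟨.A, false, false⟩)) true
          (allB (fun t =>
            match t with
            | ⟨q', w, d⟩ =>
              match set T q s ⟨q', w, d⟩ with
              | ⟨a0, a1, b0, b1, c0, c1⟩ =>
                match mv L R w d with
                | (L', s', R') => search n ⟨a0, a1, b0, b1, c0, c1⟩ q' L' s' R') allTr))
        false

def root (q : St) (w : Bool) : Bool :=
  search 22 ⟨some ⟨q, w, true⟩, none, none, none, none, none⟩ q [w] false []

def sub (w : Bool) (q : St) (v d : Bool) : Bool :=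
  match mv [w] [] v d with
  | (L, s, R) => search 21 ⟨some ⟨.B, w, true⟩, none, some ⟨q, v, d⟩, none, none, none⟩ q L s R

/-! ### Semantics -/

/-- `HaltsWith g q L s R N`: the machine `g` halts and at that time
`N` is one more than the number of ones off the head. -/
inductive HaltsWith (g : St → Bool → Option Tr) :
    St → List Bool → Bool → List Bool → ℕ → Prop
  | halt {q L s R} : g q s = none → HaltsWith g q L s R (ones L + ones R + 1)
  | step {q L s R N} (t : Tr) : g q s = some t →
      HaltsWith g t.st (mv L R t.wr t.dr).1 (mv L R t.wr t.dr).2.1 (mv L R t.wr t.dr).2.2 N →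
      HaltsWith g q L s R N

theorem force_eq (n : ℕ) (k : ℕ → Bool) : force n k = k n := by
  cases n <;> rfl

theorem dstep_lt (d a : ℕ) (x : Bool) : dstep d a x < 8 := by
  cases x <;> exact Nat.mod_lt _ (by norm_num)

theorem code_inj {q q' : St} {s s' : Bool} {a a' b b' : ℕ} (ha : a < 8) (hb : b < 8)
    (ha' : a' < 8) (hb' : b' < 8) (h : code q s a b = code q' s' a' b') :
    (⟨q, s, a, b⟩ : Node) = ⟨q', s', a', b'⟩ := by
  cases q <;> cases q' <;> cases s <;> cases s' <;>
    simp only [code, Nat.add_eq, Nat.mul_eq] at h <;>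
    first
      | (exfalso; omega)
      | (have h1 : a = a' := by omega
         have h2 : b = b' := by omega
         rw [h1, h2])

theorem memV_eq (V k : ℕ) : memV V k = V.testBit k := by
  rw [Nat.testBit_eq_decide_div_mod_eq, ← Nat.shiftRight_eq_div_pow, Bool.eq_iff_iff,
    decide_eq_true_iff]
  constructor
  · intro h
    exact Nat.eq_of_beq_eq_true h
  · intro h
    have h' : Nat.mod (Nat.shiftRight V k) 2 = 1 := h
    rw [memV, h']
    rfl

theorem memV_ins (V k j : ℕ) : memV (insV V k) j = true ↔ memV V j = true ∨ j = k := by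
  have h : insV V k = V ||| (1 <<< k) := rfl
  rw [memV_eq, memV_eq, h, Nat.testBit_or, Nat.one_shiftLeft, Nat.testBit_two_pow,
    Bool.or_eq_true, decide_eq_true_iff]
  exact or_congr Iff.rfl eq_comm

theorem memE_iff (x : Bool) (a : ℕ) (E : List Edge) :
    memE x a E = true → ∃ t, (⟨x, a, t⟩ : Edge) ∈ E := by
  induction E with
  | nil => intro h; cases h
  | cons e E ih =>
    obtain ⟨x', a', t⟩ := e
    intro h
    unfold memE at h
    have fin : memE x a E = true → ∃ t', (⟨x, a, t'⟩ : Edge) ∈ (⟨x', a', t⟩ :: E : List Edge) := by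
      intro h'
      obtain ⟨t', ht'⟩ := ih h'
      exact ⟨t', List.mem_cons_of_mem _ ht'⟩
    cases h1 : Nat.beq a a' with
    | false => rw [h1] at h; exact fin h
    | true =>
      rw [h1] at h
      cases h2 : beqB x x' with
      | false => rw [h2] at h; exact fin h
      | true =>
        have e1 : a = a' := Nat.eq_of_beq_eq_true h1
        have e2 : x = x' := by cases x <;> cases x' <;> simp_all [beqB]
        subst e1 e2
        exact ⟨t, List.mem_cons_self⟩

/-- All edges are edges of the automaton `d`. -/
def OkE (d : ℕ) (E : List Edge) : Prop :=
  (⟨false, 0, 0⟩ : Edge) ∈ E ∧ ∀ e ∈ E, e.src < 8 ∧ e.tgt = dstep d e.src e.x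

theorem OkE.cons {d : ℕ} {E : List Edge} (h : OkE d E) {x : Bool} {a : ℕ} (ha : a < 8) :
    OkE d (⟨x, a, dstep d a x⟩ :: E) := by
  refine ⟨List.mem_cons_of_mem _ h.1, ?_⟩
  intro e he
  rcases List.mem_cons.1 he with rfl | he
  · exact ⟨ha, rfl⟩
  · exact h.2 e he

theorem OkE.mem {d : ℕ} {E : List Edge} (h : OkE d E) {x : Bool} {a : ℕ}
    (hm : memE x a E = true) : (⟨x, a, dstep d a x⟩ : Edge) ∈ E := by
  obtain ⟨t, ht⟩ := memE_iff x a E hm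
  have := (h.2 _ ht).2
  simp only at this
  rw [← this]; exact ht

/-- A node is good: its transition is defined and its successors are present. -/
def Good (dl dr : ℕ) (T : Tbl) (V : Node → Prop) (EL ER : List Edge) (m : Node) : Prop :=
  ∃ t, get T m.q m.s = some t ∧
    (t.dr = true → (⟨t.wr, m.a, dstep dl m.a t.wr⟩ : Edge) ∈ EL ∧
      ∀ e ∈ ER, e.tgt = m.b → V ⟨t.st, e.x, dstep dl m.a t.wr, e.src⟩) ∧
    (t.dr = false → (⟨t.wr, m.b, dstep dr m.b t.wr⟩ : Edge) ∈ ER ∧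
      ∀ e ∈ EL, e.tgt = m.a → V ⟨t.st, e.x, e.src, dstep dr m.b t.wr⟩)

/-- The set of nodes coded by a bit mask. -/
def InV (V : ℕ) (m : Node) : Prop := m.a < 8 ∧ m.b < 8 ∧ memV V (code m.q m.s m.a m.b) = true

theorem InV_ins {V : ℕ} {q : St} {s : Bool} {a b : ℕ} (ha : a < 8) (hb : b < 8) (m : Node) :
    InV (insV V (code q s a b)) m ↔ InV V m ∨ m = ⟨q, s, a, b⟩ := by
  obtain ⟨q', s', a', b'⟩ := m
  simp only [InV, memV_ins]
  constructor
  · rintro ⟨h1, h2, h3 | h3⟩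
    · exact Or.inl ⟨h1, h2, h3⟩
    · exact Or.inr (code_inj h1 h2 ha hb h3)
  · rintro (⟨h1, h2, h3⟩ | h)
    · exact ⟨h1, h2, Or.inl h3⟩
    · cases h
      exact ⟨ha, hb, Or.inr rfl⟩

def Bdd (W : List Node) : Prop := ∀ m ∈ W, m.a < 8 ∧ m.b < 8

theorem exR_spec (q : St) (a b : ℕ) (ha : a < 8) (k : List Node → ℕ → Bool) (E : List Edge) :
    ∀ (W : List Node) (V : ℕ), (∀ e ∈ E, e.src < 8) → Bdd W → exR q a b k E W V = true →
    ∃ W' V', k W' V' = true ∧ Bdd W' ∧ (∀ m ∈ W, m ∈ W') ∧ (∀ m, InV V m → InV V' m) ∧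
      (∀ m, InV V' m → InV V m ∨ m ∈ W') ∧
      (∀ e ∈ E, e.tgt = b → InV V' ⟨q, e.x, a, e.src⟩) := by
  induction E with
  | nil =>
    intro W V _ hB h
    exact ⟨W, V, h, hB, fun _ h => h, fun _ h => h, fun _ h => Or.inl h, by simp⟩
  | cons e E ih =>
    obtain ⟨x, b', t⟩ := e
    intro W V hE hB h
    have hb' : b' < 8 := hE _ List.mem_cons_self
    have hE' : ∀ e ∈ E, e.src < 8 := fun e he => hE e (List.mem_cons_of_mem _ he)
    unfold exR at h
    cases h1 : Nat.beq t b with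
    | false =>
      rw [h1] at h
      obtain ⟨W', V', k1, k2, k3, k4, k5, k6⟩ := ih W V hE' hB h
      refine ⟨W', V', k1, k2, k3, k4, k5, ?_⟩
      intro e he het
      rcases List.mem_cons.1 he with rfl | he
      · simp only at het
        rw [het, Nat.beq_refl] at h1
        cases h1
      · exact k6 e he het
    | true =>
      rw [h1] at h
      cases h2 : memV V (code q x a b') with
      | true =>
        rw [h2] at h
        obtain ⟨W', V', k1, k2, k3, k4, k5, k6⟩ := ih W V hE' hB h
        refine ⟨W', V', k1, k2, k3, k4, k5, ?_⟩
        intro e he het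
        rcases List.mem_cons.1 he with rfl | he
        · exact k4 _ ⟨ha, hb', h2⟩
        · exact k6 e he het
      | false =>
        rw [h2] at h
        simp only [cond, force_eq] at h
        have hB' : Bdd (⟨q, x, a, b'⟩ :: W) := by
          intro m hm
          rcases List.mem_cons.1 hm with rfl | hm
          · exact ⟨ha, hb'⟩
          · exact hB m hm
        obtain ⟨W', V', k1, k2, k3, k4, k5, k6⟩ := ih _ _ hE' hB' h
        refine ⟨W', V', k1, k2, fun m hm => k3 m (List.mem_cons_of_mem _ hm),
          fun m hm => k4 m ((InV_ins ha hb' m).2 (Or.inl hm)), ?_, ?_⟩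
        · intro m hm
          rcases k5 m hm with h' | h'
          · rcases (InV_ins ha hb' m).1 h' with h' | rfl
            · exact Or.inl h'
            · exact Or.inr (k3 _ List.mem_cons_self)
          · exact Or.inr h'
        · intro e he het
          rcases List.mem_cons.1 he with rfl | he
          · exact k4 _ ((InV_ins ha hb' _).2 (Or.inr rfl))
          · exact k6 e he het

theorem exL_spec (q : St) (a b : ℕ) (hb : b < 8) (k : List Node → ℕ → Bool) (E : List Edge) :
    ∀ (W : List Node) (V : ℕ), (∀ e ∈ E, e.src < 8) → Bdd W → exL q a b k E W V = true →
    ∃ W' V', k W' V' = true ∧ Bdd W' ∧ (∀ m ∈ W, m ∈ W') ∧ (∀ m, InV V m → InV V' m) ∧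
      (∀ m, InV V' m → InV V m ∨ m ∈ W') ∧
      (∀ e ∈ E, e.tgt = a → InV V' ⟨q, e.x, e.src, b⟩) := by
  induction E with
  | nil =>
    intro W V _ hB h
    exact ⟨W, V, h, hB, fun _ h => h, fun _ h => h, fun _ h => Or.inl h, by simp⟩
  | cons e E ih =>
    obtain ⟨x, b', t⟩ := e
    intro W V hE hB h
    have hb' : b' < 8 := hE _ List.mem_cons_self
    have hE' : ∀ e ∈ E, e.src < 8 := fun e he => hE e (List.mem_cons_of_mem _ he)
    unfold exL at h
    cases h1 : Nat.beq t a with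
    | false =>
      rw [h1] at h
      obtain ⟨W', V', k1, k2, k3, k4, k5, k6⟩ := ih W V hE' hB h
      refine ⟨W', V', k1, k2, k3, k4, k5, ?_⟩
      intro e he het
      rcases List.mem_cons.1 he with rfl | he
      · simp only at het
        rw [het, Nat.beq_refl] at h1
        cases h1
      · exact k6 e he het
    | true =>
      rw [h1] at h
      cases h2 : memV V (code q x b' b) with
      | true =>
        rw [h2] at h
        obtain ⟨W', V', k1, k2, k3, k4, k5, k6⟩ := ih W V hE' hB h
        refine ⟨W', V', k1, k2, k3, k4, k5, ?_⟩
        intro e he het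
        rcases List.mem_cons.1 he with rfl | he
        · exact k4 _ ⟨hb', hb, h2⟩
        · exact k6 e he het
      | false =>
        rw [h2] at h
        simp only [cond, force_eq] at h
        have hB' : Bdd (⟨q, x, b', b⟩ :: W) := by
          intro m hm
          rcases List.mem_cons.1 hm with rfl | hm
          · exact ⟨hb', hb⟩
          · exact hB m hm
        obtain ⟨W', V', k1, k2, k3, k4, k5, k6⟩ := ih _ _ hE' hB' h
        refine ⟨W', V', k1, k2, fun m hm => k3 m (List.mem_cons_of_mem _ hm),
          fun m hm => k4 m ((InV_ins hb' hb m).2 (Or.inl hm)), ?_, ?_⟩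
        · intro m hm
          rcases k5 m hm with h' | h'
          · rcases (InV_ins hb' hb m).1 h' with h' | rfl
            · exact Or.inl h'
            · exact Or.inr (k3 _ List.mem_cons_self)
          · exact Or.inr h'
        · intro e he het
          rcases List.mem_cons.1 he with rfl | he
          · exact k4 _ ((InV_ins hb' hb _).2 (Or.inr rfl))
          · exact k6 e he het

theorem Good.mono {dl dr : ℕ} {T : Tbl} {V V' : Node → Prop} {EL ER : List Edge} {m : Node}
    (hV : ∀ m, V m → V' m) (h : Good dl dr T V EL ER m) : Good dl dr T V' EL ER m := by
  obtain ⟨t, h1, h2, h3⟩ := h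
  exact ⟨t, h1, fun h => ⟨(h2 h).1, fun e he het => hV _ ((h2 h).2 e he het)⟩,
    fun h => ⟨(h3 h).1, fun e he het => hV _ ((h3 h).2 e he het)⟩⟩

theorem loop_sound (dl dr : ℕ) (T : Tbl) (n : ℕ) :
    ∀ (W P : List Node) (V : ℕ) (EL ER : List Edge), loop dl dr T n W P V EL ER = true →
    OkE dl EL → OkE dr ER → Bdd W → Bdd P →
    (∀ m, InV V m → m ∈ W ∨ (m ∈ P ∧ Good dl dr T (InV V) EL ER m)) →
    ∃ V' EL' ER', (∀ m, InV V m → InV V' m) ∧ (∀ e ∈ EL, e ∈ EL') ∧ (∀ e ∈ ER, e ∈ ER') ∧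
      ∀ m, InV V' m → Good dl dr T (InV V') EL' ER' m := by
  induction n with
  | zero => intro W P V EL ER h; cases h
  | succ n ih =>
    intro W P V EL ER h hL hR hW hP hI
    rcases W with _ | ⟨⟨q, s, a, b⟩, W⟩
    · refine ⟨V, EL, ER, fun _ h => h, fun _ h => h, fun _ h => h, ?_⟩
      intro m hm
      rcases hI m hm with h' | h'
      · cases h'
      · exact h'.2
    · have hab := hW _ List.mem_cons_self
      simp only at hab
      have hW' : Bdd W := fun m hm => hW m (List.mem_cons_of_mem _ hm)
      have hPc : Bdd (⟨q, s, a, b⟩ :: P) := by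
        intro m hm
        rcases List.mem_cons.1 hm with rfl | hm
        · exact hab
        · exact hP m hm
      have hWP : Bdd (⟨q, s, a, b⟩ :: (W ++ P)) := by
        intro m hm
        rcases List.mem_cons.1 hm with rfl | hm
        · exact hab
        · rcases List.mem_append.1 hm with hm | hm
          · exact hW' m hm
          · exact hP m hm
      have hnil : Bdd [] := by intro m hm; cases hm
      have hre : ∀ m, InV V m → m ∈ (⟨q, s, a, b⟩ :: (W ++ P) : List Node) := by
        intro m hm
        rcases hI m hm with h' | h'
        · rcases List.mem_cons.1 h' with rfl | h'
          · exact List.mem_cons_self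
          · exact List.mem_cons_of_mem _ (List.mem_append_left _ h')
        · exact List.mem_cons_of_mem _ (List.mem_append_right _ h'.1)
      unfold loop at h
      rcases hg : get T q s with _ | ⟨q', w, d⟩
      · simp [hg] at h
      · cases d with
        | true =>
          simp only [hg, force_eq] at h
          cases hm : memE w a EL with
          | true =>
            rw [hm] at h
            simp only [cond] at h
            obtain ⟨W2, V2, k1, k2, k3, k4, k5, k6⟩ :=
              exR_spec q' _ b (dstep_lt dl a w) _ ER W V (fun e he => (hR.2 e he).1) hW' h
            have key : Good dl dr T (InV V2) EL ER ⟨q, s, a, b⟩ :=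
              ⟨_, hg, fun _ => ⟨hL.mem hm, k6⟩, fun h => by cases h⟩
            obtain ⟨V', EL', ER', j1, j2, j3, j4⟩ := ih _ _ _ _ _ k1 hL hR k2 hPc (by
              intro m hm
              rcases k5 m hm with h' | h'
              · rcases hI m h' with h' | h'
                · rcases List.mem_cons.1 h' with rfl | h'
                  · exact Or.inr ⟨List.mem_cons_self, key⟩
                  · exact Or.inl (k3 m h')
                · exact Or.inr ⟨List.mem_cons_of_mem _ h'.1, h'.2.mono k4⟩
              · exact Or.inl h')
            exact ⟨V', EL', ER', fun m hm => j1 m (k4 m hm), j2, j3, j4⟩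
          | false =>
            rw [hm] at h
            simp only [cond] at h
            obtain ⟨V', EL', ER', j1, j2, j3, j4⟩ := ih _ _ _ _ _ h (hL.cons hab.1) hR hWP hnil
              (fun m hm => Or.inl (hre m hm))
            exact ⟨V', EL', ER', j1, fun e he => j2 e (List.mem_cons_of_mem _ he), j3, j4⟩
        | false =>
          simp only [hg, force_eq] at h
          cases hm : memE w b ER with
          | true =>
            rw [hm] at h
            simp only [cond] at h
            obtain ⟨W2, V2, k1, k2, k3, k4, k5, k6⟩ :=
              exL_spec q' a _ (dstep_lt dr b w) _ EL W V (fun e he => (hL.2 e he).1) hW' h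
            have key : Good dl dr T (InV V2) EL ER ⟨q, s, a, b⟩ :=
              ⟨⟨q', w, false⟩, hg, fun h => (by cases h), fun _ => ⟨hR.mem hm, k6⟩⟩
            obtain ⟨V', EL', ER', j1, j2, j3, j4⟩ := ih _ _ _ _ _ k1 hL hR k2 hPc (by
              intro m hm
              rcases k5 m hm with h' | h'
              · rcases hI m h' with h' | h'
                · rcases List.mem_cons.1 h' with rfl | h'
                  · exact Or.inr ⟨List.mem_cons_self, key⟩
                  · exact Or.inl (k3 m h')
                · exact Or.inr ⟨List.mem_cons_of_mem _ h'.1, h'.2.mono k4⟩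
              · exact Or.inl h')
            exact ⟨V', EL', ER', fun m hm => j1 m (k4 m hm), j2, j3, j4⟩
          | false =>
            rw [hm] at h
            simp only [cond] at h
            obtain ⟨V', EL', ER', j1, j2, j3, j4⟩ := ih _ _ _ _ _ h hL (hR.cons hab.2) hWP hnil
              (fun m hm => Or.inl (hre m hm))
            exact ⟨V', EL', ER', j1, j2, fun e he => j3 e (List.mem_cons_of_mem _ he), j4⟩

/-- The automaton state of a half-tape. -/
def runD (d : ℕ) : List Bool → ℕ
  | [] => 0
  | x :: l => dstep d (runD d l) x

/-- All edges used on a half-tape are listed. -/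
def EdgesIn (d : ℕ) (E : List Edge) : List Bool → Prop
  | [] => True
  | x :: l => (⟨x, runD d l, dstep d (runD d l) x⟩ : Edge) ∈ E ∧ EdgesIn d E l

theorem EdgesIn.mono {d : ℕ} {E E' : List Edge} (h : ∀ e ∈ E, e ∈ E') :
    ∀ {l : List Bool}, EdgesIn d E l → EdgesIn d E' l
  | [], _ => trivial
  | _ :: _, hl => ⟨h _ hl.1, EdgesIn.mono h hl.2⟩

theorem runD_lt (d : ℕ) (l : List Bool) : runD d l < 8 := by
  cases l with
  | nil => exact Nat.succ_pos 7
  | cons x l => exact dstep_lt _ _ _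

theorem collect_spec (d : ℕ) (hd : dstep d 0 false = 0) (l : List Bool) :
    ∀ k : ℕ → List Edge → Bool, collect d k l = true →
    ∃ E, k (runD d l) E = true ∧ OkE d E ∧ EdgesIn d E l := by
  induction l with
  | nil =>
    intro k h
    refine ⟨_, h, ⟨List.mem_cons_self, ?_⟩, trivial⟩
    intro e he
    rcases List.mem_cons.1 he with rfl | he
    · exact ⟨by norm_num, hd.symm⟩
    · cases he
  | cons x l ih =>
    intro k h
    obtain ⟨E, h1, h2, h3⟩ := ih _ h
    rw [force_eq] at h1
    cases hm : memE x (runD d l) E with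
    | true =>
      rw [hm] at h1
      exact ⟨E, h1, h2, h2.mem hm, h3⟩
    | false =>
      rw [hm] at h1
      exact ⟨_, h1, h2.cons (runD_lt d l), List.mem_cons_self,
        EdgesIn.mono (fun e he => List.mem_cons_of_mem _ he) h3⟩

/-- `g` extends the partial table `T`. -/
def Ext (T : Tbl) (g : St → Bool → Option Tr) : Prop :=
  ∀ q s t, get T q s = some t → g q s = some t

theorem closed_sound (dl dr : ℕ) (T : Tbl) (V : Node → Prop) (EL ER : List Edge)
    (g : St → Bool → Option Tr) (hg : Ext T g)
    (hL0 : (⟨false, 0, 0⟩ : Edge) ∈ EL) (hR0 : (⟨false, 0, 0⟩ : Edge) ∈ ER)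
    (hc : ∀ m, V m → Good dl dr T V EL ER m)
    {q : St} {L : List Bool} {s : Bool} {R : List Bool} {N : ℕ}
    (h : HaltsWith g q L s R N) :
    V ⟨q, s, runD dl L, runD dr R⟩ → EdgesIn dl EL L → EdgesIn dr ER R → False := by
  induction h with
  | halt h0 =>
    intro hV _ _
    obtain ⟨t, h1, _⟩ := hc _ hV
    have := hg _ _ _ h1
    rw [h0] at this
    cases this
  | @step q L s R N t h0 _ ih =>
    intro hV hL hR
    obtain ⟨t', h1, h2, h3⟩ := hc _ hV
    have h4 := hg _ _ _ h1
    simp only at h4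
    rw [h0] at h4
    cases h4
    obtain ⟨q', w, d⟩ := t
    cases d with
    | true =>
      obtain ⟨e1, e2⟩ := h2 rfl
      cases R with
      | nil => exact ih (e2 _ hR0 rfl) ⟨e1, hL⟩ trivial
      | cons x R => exact ih (e2 _ hR.1 rfl) ⟨e1, hL⟩ hR.2
    | false =>
      obtain ⟨e1, e2⟩ := h3 rfl
      cases L with
      | nil => exact ih (e2 _ hL0 rfl) trivial ⟨e1, hR⟩
      | cons x L => exact ih (e2 _ hL.1 rfl) hL.2 ⟨e1, hR⟩

theorem memV_zero (k : ℕ) : memV 0 k = false := by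
  rw [memV_eq, Nat.zero_testBit]

theorem tryD_sound (dl dr : ℕ) (hdl : dstep dl 0 false = 0) (hdr : dstep dr 0 false = 0) (T : Tbl)
    (g : St → Bool → Option Tr) (hg : Ext T g)
    {q : St} {L : List Bool} {s : Bool} {R : List Bool} {N : ℕ}
    (ht : tryD dl dr T q L s R = true) (h : HaltsWith g q L s R N) : False := by
  unfold tryD at ht
  obtain ⟨EL, h1, l1, l2⟩ := collect_spec dl hdl L _ ht
  obtain ⟨ER, h2, r1, r2⟩ := collect_spec dr hdr R _ h1
  rw [force_eq] at h2
  have hi := fun m => InV_ins (V := 0) (q := q) (s := s) (runD_lt dl L) (runD_lt dr R) m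
  have hz : ∀ m, ¬ InV 0 m := by
    intro m hm
    have := hm.2.2
    rw [memV_zero] at this
    cases this
  obtain ⟨V', EL', ER', j1, j2, j3, j4⟩ := loop_sound dl dr T _ _ _ _ _ _ h2 l1 r1
    (by
      intro m hm
      rcases List.mem_cons.1 hm with rfl | hm
      · exact ⟨runD_lt dl L, runD_lt dr R⟩
      · cases hm)
    (by intro m hm; cases hm)
    (by
      intro m hm
      rcases (hi m).1 hm with h' | rfl
      · exact (hz m h').elim
      · exact Or.inl List.mem_cons_self)
  exact closed_sound dl dr T (InV V') EL' ER' g hg (j2 _ l1.1) (j3 _ r1.1) j4 h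
    (j1 _ ((hi _).2 (Or.inr rfl))) (EdgesIn.mono j2 l2) (EdgesIn.mono j3 r2)

theorem cond_or {a b : Bool} (h : cond a true b = true) : a = true ∨ b = true := by
  cases a <;> simp_all

theorem decider_sound (T : Tbl) (g : St → Bool → Option Tr) (hg : Ext T g)
    {q : St} {L : List Bool} {s : Bool} {R : List Bool} {N : ℕ}
    (ht : decider T q L s R = true) (h : HaltsWith g q L s R N) : False := by
  unfold decider at ht
  rcases cond_or ht with ht | ht
  · exact tryD_sound _ _ (by decide) (by decide) T g hg ht h
  rcases cond_or ht with ht | ht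
  · exact tryD_sound _ _ (by decide) (by decide) T g hg ht h
  rcases cond_or ht with ht | ht
  · exact tryD_sound _ _ (by decide) (by decide) T g hg ht h
  rcases cond_or ht with ht | ht
  · exact tryD_sound _ _ (by decide) (by decide) T g hg ht h
  rcases cond_or ht with ht | ht
  · exact tryD_sound _ _ (by decide) (by decide) T g hg ht h
  · exact tryD_sound _ _ (by decide) (by decide) T g hg ht h

theorem full_sound (T : Tbl) (hT : full T = true) (g : St → Bool → Option Tr) (hg : Ext T g)
    {q : St} {L : List Bool} {s : Bool} {R : List Bool} {N : ℕ}
    (h : HaltsWith g q L s R N) : False := by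
  induction h with
  | @halt q L s R h0 =>
    have : ∃ t, get T q s = some t := by
      obtain ⟨_ | a0, _ | a1, _ | b0, _ | b1, _ | c0, _ | c1⟩ := T <;>
        first
          | (cases hT; done)
          | (cases q <;> cases s <;> exact ⟨_, rfl⟩)
    obtain ⟨t, ht⟩ := this
    rw [hg _ _ _ ht] at h0
    cases h0
  | step _ _ _ ih => exact ih

theorem full_set (T : Tbl) (q : St) (s : Bool) (t t' : Tr) :
    full (set T q s t) = full (set T q s t') := by
  obtain ⟨_ | a0, _ | a1, _ | b0, _ | b1, _ | c0, _ | c1⟩ := T <;>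
  cases q <;> cases s <;> rfl

theorem Ext.set {T : Tbl} {g : St → Bool → Option Tr} (hg : Ext T g) {q : St} {s : Bool} {t : Tr}
    (h : g q s = some t) : Ext (set T q s t) g := by
  intro q' s' t' h'
  have hh := hg q' s' t'
  cases q <;> cases s <;> cases q' <;> cases s' <;>
    first
      | exact hh h'
      | (have e : some t = some t' := h'
         rw [← e]; exact h)

theorem mem_allTr (t : Tr) : t ∈ allTr := by
  obtain ⟨q, w, d⟩ := t
  cases q <;> cases w <;> cases d <;> simp [allTr]

theorem allB_mem {p : Tr → Bool} {l : List Tr} (h : allB p l = true) : ∀ t ∈ l, p t = true := by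
  induction l with
  | nil => intro t ht; cases ht
  | cons a l ih =>
    intro t ht
    unfold allB at h
    cases hp : p a with
    | false => rw [hp] at h; cases h
    | true =>
      rw [hp] at h
      rcases List.mem_cons.1 ht with rfl | ht
      · exact hp
      · exact ih h t ht

theorem search_sound (n : ℕ) : ∀ (T : Tbl) (g : St → Bool → Option Tr) (_ : Ext T g)
    (q : St) (L : List Bool) (s : Bool) (R : List Bool) (N : ℕ),
    search n T q L s R = true → HaltsWith g q L s R N → N ≤ 6 := by
  induction n with
  | zero =>
    intro T g hg q L s R N h hh
    exact (decider_sound T g hg h hh).elim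
  | succ n ih =>
    intro T g hg q L s R N h hh
    unfold search at h
    rcases ht : get T q s with _ | t
    · simp only [ht] at h
      cases hb : Nat.ble (Nat.add (ones L) (ones R)) 5 with
      | false => rw [hb] at h; cases h
      | true =>
        rw [hb] at h
        simp only [cond] at h
        have hle : ones L + ones R ≤ 5 := Nat.le_of_ble_eq_true hb
        cases hh with
        | halt _ => omega
        | step t h0 hh =>
          have hx := hg.set h0
          cases hf : full (set T q s ⟨.A, false, false⟩) with
          | true =>
            rw [full_set T q s _ t] at hf
            exact (full_sound _ hf g hx hh).elim
          | false =>
            rw [hf] at h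
            have h' := allB_mem h t (mem_allTr t)
            obtain ⟨q', w, d⟩ := t
            exact ih (set T q s ⟨q', w, d⟩) g hx _ _ _ _ _ h' hh
    · simp only [ht] at h
      have h1 := hg _ _ _ ht
      cases hh with
      | halt h0 => rw [h1] at h0; cases h0
      | step t' h0 hh =>
        rw [h1] at h0
        cases h0
        exact ih T g hg _ _ _ _ _ h hh

/-! ### Symmetries -/

def mirTr (t : Tr) : Tr := ⟨t.st, t.wr, !t.dr⟩

def mirror (g : St → Bool → Option Tr) (q : St) (s : Bool) : Option Tr := (g q s).map mirTr

theorem mirror_halts {g : St → Bool → Option Tr}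
    {q : St} {L : List Bool} {s : Bool} {R : List Bool} {N : ℕ}
    (h : HaltsWith g q L s R N) : HaltsWith (mirror g) q R s L N := by
  induction h with
  | @halt q L s R h0 =>
    rw [Nat.add_comm (ones L)]
    exact HaltsWith.halt (by rw [mirror, h0]; rfl)
  | @step q L s R N t h0 _ ih =>
    refine HaltsWith.step (mirTr t) (by rw [mirror, h0]; rfl) ?_
    obtain ⟨q', w, d⟩ := t
    cases d <;> cases L <;> cases R <;> exact ih

def sw : St → St
  | .A => .A
  | .B => .C
  | .C => .B

theorem sw_sw (q : St) : sw (sw q) = q := by cases q <;> rfl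

def swTr (t : Tr) : Tr := ⟨sw t.st, t.wr, t.dr⟩

def swap (g : St → Bool → Option Tr) (q : St) (s : Bool) : Option Tr := (g (sw q) s).map swTr

theorem swap_halts {g : St → Bool → Option Tr}
    {q : St} {L : List Bool} {s : Bool} {R : List Bool} {N : ℕ}
    (h : HaltsWith g q L s R N) : HaltsWith (swap g) (sw q) L s R N := by
  induction h with
  | @halt q L s R h0 =>
    exact HaltsWith.halt (by rw [swap, sw_sw, h0]; rfl)
  | @step q L s R N t h0 _ ih =>
    refine HaltsWith.step (swTr t) (by rw [swap, sw_sw, h0]; rfl) ?_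
    exact ih

/-! ### The computation -/

theorem sub_false_A : (sub false .A false false && sub false .A false true &&
    (sub false .A true false && sub false .A true true)) = true := by decide +kernel

theorem sub_false_B : (sub false .B false false && sub false .B false true &&
    (sub false .B true false && sub false .B true true)) = true := by decide +kernel

theorem sub_false_C : (sub false .C false false && sub false .C false true &&
    (sub false .C true false && sub false .C true true)) = true := by decide +kernel

theorem sub_true_A : (sub true .A false false && sub true .A false true &&
    (sub true .A true false && sub true .A true true)) = true := by decide +kernel

theorem sub_true_B : (sub true .B false false && sub true .B false true &&
    (sub true .B true false && sub true .B true true)) = true := by decide +kernel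

theorem sub_true_C : (sub true .C false false && sub true .C false true &&
    (sub true .C true false && sub true .C true true)) = true := by decide +kernel

theorem root_A : (root .A false && root .A true) = true := by decide +kernel

theorem and4 {p : Bool → Bool → Bool}
    (h : (p false false && p false true && (p true false && p true true)) = true) :
    ∀ v d, p v d = true := by
  simp only [Bool.and_eq_true] at h
  intro v d
  cases v <;> cases d
  · exact h.1.1
  · exact h.1.2
  · exact h.2.1
  · exact h.2.2

theorem sub_ok (w : Bool) (q : St) (v d : Bool) : sub w q v d = true := by
  cases w <;> cases q
  · exact and4 sub_false_A v d
  · exact and4 sub_false_B v d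
  · exact and4 sub_false_C v d
  · exact and4 sub_true_A v d
  · exact and4 sub_true_B v d
  · exact and4 sub_true_C v d

theorem bound_A {g : St → Bool → Option Tr} {w : Bool} {N : ℕ}
    (h0 : g .A false = some ⟨.A, w, true⟩) (h : HaltsWith g .A [w] false [] N) : N ≤ 6 := by
  have hr : root .A w = true := by
    have := root_A
    rw [Bool.and_eq_true] at this
    cases w
    · exact this.1
    · exact this.2
  refine search_sound _ _ g ?_ _ _ _ _ N hr h
  intro q s t ht
  cases q <;> cases s <;> cases ht
  exact h0

theorem bound_B {g : St → Bool → Option Tr} {w : Bool} {N : ℕ}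
    (h0 : g .A false = some ⟨.B, w, true⟩) (h : HaltsWith g .B [w] false [] N) : N ≤ 6 := by
  cases h with
  | halt _ => cases w <;> simp [ones]
  | step t h1 h =>
    obtain ⟨q, v, d⟩ := t
    refine search_sound _ _ g ?_ _ _ _ _ N (sub_ok w q v d) h
    intro q s t ht
    cases q <;> cases s <;> cases ht
    · exact h0
    · exact h1

theorem bound_right {g : St → Bool → Option Tr} {t : Tr} {N : ℕ} (hd : t.dr = true)
    (h0 : g .A false = some t) (h : HaltsWith g .A [] false [] N) : N ≤ 6 := by
  have h' := h
  obtain ⟨q, w, d⟩ := t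
  cases hd
  cases h with
  | halt _ => simp [ones]
  | step t' h1 h =>
    rw [h0] at h1
    cases h1
    cases q with
    | A => exact bound_A h0 h
    | B => exact bound_B h0 h
    | C =>
      refine bound_B (g := swap g) (w := w) ?_ (swap_halts h)
      show (g .A false).map swTr = _
      rw [h0]; rfl

theorem bound {g : St → Bool → Option Tr} {N : ℕ} (h : HaltsWith g .A [] false [] N) : N ≤ 6 := by
  rcases h0 : g .A false with _ | ⟨q, w, d⟩
  · cases h with
    | halt _ => simp [ones]
    | step t' h1 h => rw [h0] at h1; cases h1
  · cases d with
    | true => exact bound_right rfl h0 h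
    | false =>
      refine bound_right (g := mirror g) (t := ⟨q, w, true⟩) rfl ?_ (mirror_halts h)
      show (g .A false).map mirTr = _
      rw [h0]; rfl

/-! ### Connection with the model of the statement -/

def enc (q : Fin 3) : St :=
  match q with
  | 0 => .A
  | 1 => .B
  | 2 => .C

def dec : St → Fin 3
  | .A => 0
  | .B => 1
  | .C => 2

theorem dec_enc (q : Fin 3) : dec (enc q) = q := by
  fin_cases q <;> rfl

/-- The effect of a maximal sequence of stay moves. -/
inductive Stay (f : Fin 3 × Bool → Option (Fin 3 × Bool × Dir)) :
    Fin 3 → Bool → Option Tr → Prop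
  | halt {q s} : f (q, s) = none → Stay f q s none
  | left {q s q' w} : f (q, s) = some (q', w, .left) → Stay f q s (some ⟨enc q', w, false⟩)
  | right {q s q' w} : f (q, s) = some (q', w, .right) → Stay f q s (some ⟨enc q', w, true⟩)
  | stay {q s q' w r} : f (q, s) = some (q', w, .stay) → Stay f q' w r → Stay f q s r

theorem Stay.det {f : Fin 3 × Bool → Option (Fin 3 × Bool × Dir)} {q : Fin 3} {s : Bool}
    {r r' : Option Tr} (h : Stay f q s r) (h' : Stay f q s r') : r = r' := by
  induction h with
  | halt h0 => cases h' <;> simp_all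
  | left h0 => cases h' <;> simp_all
  | right h0 => cases h' <;> simp_all
  | stay h0 _ ih =>
    cases h' with
    | halt h1 => simp_all
    | left h1 => simp_all
    | right h1 => simp_all
    | stay h1 h2 =>
      rw [h0] at h1
      cases h1
      exact ih h2

open Classical in
/-- The machine without stay moves. -/
noncomputable def mach (f : Fin 3 × Bool → Option (Fin 3 × Bool × Dir)) (q : St) (s : Bool) :
    Option Tr :=
  if h : ∃ r, Stay f (dec q) s r then h.choose else none

theorem mach_eq {f : Fin 3 × Bool → Option (Fin 3 × Bool × Dir)} {q : Fin 3} {s : Bool}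
    {r : Option Tr} (h : Stay f q s r) : mach f (enc q) s = r := by
  have hex : ∃ r, Stay f (dec (enc q)) s r := ⟨r, by rw [dec_enc]; exact h⟩
  have h2 := hex.choose_spec
  unfold mach
  rw [dif_pos hex]
  exact Stay.det h2 (by rw [dec_enc]; exact h)

/-- The half-tapes represent the tape around position `p`. -/
def Rep (tape : ℤ → Bool) (p : ℤ) (L R : List Bool) : Prop :=
  (∀ k : ℕ, tape (p - 1 - k) = L.getD k false) ∧ (∀ k : ℕ, tape (p + 1 + k) = R.getD k false)

theorem Rep.stay {tape : ℤ → Bool} {p : ℤ} {L R : List Bool} (h : Rep tape p L R) (w : Bool) :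
    Rep (Function.update tape p w) p L R := by
  constructor
  · intro k
    rw [Function.update_of_ne (by omega)]
    exact h.1 k
  · intro k
    rw [Function.update_of_ne (by omega)]
    exact h.2 k

theorem Rep.right {tape : ℤ → Bool} {p : ℤ} {L R : List Bool} (h : Rep tape p L R) (w : Bool) :
    Rep (Function.update tape p w) (p + 1) (mv L R w true).1 (mv L R w true).2.2 ∧
      Function.update tape p w (p + 1) = (mv L R w true).2.1 := by
  have e1 : (mv L R w true).1 = w :: L := by cases R <;> rfl
  have e2 : (mv L R w true).2.1 = R.getD 0 false := by cases R <;> rfl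
  have e3 : ∀ k, (mv L R w true).2.2.getD k false = R.getD (k + 1) false := by
    intro k
    cases R <;> simp [mv]
  refine ⟨⟨?_, ?_⟩, ?_⟩
  · intro k
    rw [e1]
    cases k with
    | zero => simp
    | succ k =>
      rw [Function.update_of_ne (by push_cast; omega), List.getD_cons_succ, ← h.1 k]
      congr 1
      push_cast
      ring
  · intro k
    rw [e3, Function.update_of_ne (by omega), ← h.2 (k + 1)]
    congr 1
    push_cast
    ring
  · rw [e2, Function.update_of_ne (by omega), ← h.2 0]
    simp

theorem Rep.left {tape : ℤ → Bool} {p : ℤ} {L R : List Bool} (h : Rep tape p L R) (w : Bool) :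
    Rep (Function.update tape p w) (p + -1) (mv L R w false).1 (mv L R w false).2.2 ∧
      Function.update tape p w (p + -1) = (mv L R w false).2.1 := by
  have e1 : (mv L R w false).2.2 = w :: R := by cases L <;> rfl
  have e2 : (mv L R w false).2.1 = L.getD 0 false := by cases L <;> rfl
  have e3 : ∀ k, (mv L R w false).1.getD k false = L.getD (k + 1) false := by
    intro k
    cases L <;> simp [mv]
  refine ⟨⟨?_, ?_⟩, ?_⟩
  · intro k
    rw [e3, Function.update_of_ne (by omega), ← h.1 (k + 1)]
    congr 1
    push_cast
    ring
  · intro k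
    rw [e1]
    cases k with
    | zero => simp
    | succ k =>
      rw [Function.update_of_ne (by push_cast; omega), List.getD_cons_succ, ← h.2 k]
      congr 1
      push_cast
      ring
  · rw [e2, Function.update_of_ne (by omega), ← h.1 0]
    congr 1
    simp
    ring

theorem card_ones (l : List Bool) :
    ((Finset.range l.length).filter fun k => l.getD k false = true).card = ones l := by
  induction l with
  | nil => rfl
  | cons x l ih =>
    rw [Finset.card_filter] at ih ⊢
    rw [List.length_cons, Finset.sum_range_succ']
    simp only [List.getD_cons_succ, List.getD_cons_zero]
    rw [ih]
    cases x <;> rfl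

theorem count_ones (l : List Bool) : l.count true = ones l := by
  induction l with
  | nil => rfl
  | cons x l ih => cases x <;> simp [ones, ih]

theorem word_le {tape : ℤ → Bool} {p : ℤ} {L R : List Bool} (h : Rep tape p L R)
    {w : List Bool} (hw : TapeWord tape w) : w.count true ≤ ones L + ones R + 1 := by
  obtain ⟨i, h1, -, -⟩ := hw
  rw [count_ones, ← card_ones w, ← card_ones L, ← card_ones R]
  set SL := (Finset.range L.length).filter fun k => L.getD k false = true with hSL
  set SR := (Finset.range R.length).filter fun k => R.getD k false = true with hSR
  set SW := (Finset.range w.length).filter fun k => w.getD k false = true with hSW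
  have hin : ∀ (l : List Bool) (k : ℕ), l.getD k false = true → k < l.length := by
    intro l k hk
    by_contra hlt
    rw [List.getD_eq_default _ _ (by omega)] at hk
    cases hk
  have hsub : SW.image (fun k : ℕ => i + (k : ℤ)) ⊆
      (SL.image (fun k : ℕ => p - 1 - (k : ℤ)) ∪ SR.image (fun k : ℕ => p + 1 + (k : ℤ))) ∪ {p} := by
    intro j hj
    obtain ⟨k, hk, rfl⟩ := Finset.mem_image.1 hj
    rw [hSW, Finset.mem_filter, Finset.mem_range] at hk
    have ht : tape (i + k) = true := by rw [← h1 k hk.1]; exact hk.2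
    rcases lt_trichotomy (i + (k : ℤ)) p with hlt | heq | hgt
    · refine Finset.mem_union_left _ (Finset.mem_union_left _ (Finset.mem_image.2
        ⟨(p - 1 - (i + k)).toNat, ?_, ?_⟩))
      · have := h.1 (p - 1 - (i + k)).toNat
        rw [show p - 1 - (((p - 1 - (i + k)).toNat : ℕ) : ℤ) = i + k by omega, ht] at this
        rw [hSL, Finset.mem_filter, Finset.mem_range]
        exact ⟨hin _ _ this.symm, this.symm⟩
      · omega
    · exact Finset.mem_union_right _ (Finset.mem_singleton.2 heq)
    · refine Finset.mem_union_left _ (Finset.mem_union_right _ (Finset.mem_image.2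
        ⟨(i + k - p - 1).toNat, ?_, ?_⟩))
      · have := h.2 (i + k - p - 1).toNat
        rw [show p + 1 + (((i + k - p - 1).toNat : ℕ) : ℤ) = i + k by omega, ht] at this
        rw [hSR, Finset.mem_filter, Finset.mem_range]
        exact ⟨hin _ _ this.symm, this.symm⟩
      · omega
  have hc := Finset.card_le_card hsub
  rw [Finset.card_image_of_injective _ (fun a b hab => by simpa using hab)] at hc
  have u1 := Finset.card_union_le (SL.image (fun k : ℕ => p - 1 - (k : ℤ)) ∪
    SR.image (fun k : ℕ => p + 1 + (k : ℤ))) {p}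
  have u2 := Finset.card_union_le (SL.image (fun k : ℕ => p - 1 - (k : ℤ)))
    (SR.image (fun k : ℕ => p + 1 + (k : ℤ)))
  have u3 : (SL.image (fun k : ℕ => p - 1 - (k : ℤ))).card ≤ SL.card := Finset.card_image_le
  have u4 : (SR.image (fun k : ℕ => p + 1 + (k : ℤ))).card ≤ SR.card := Finset.card_image_le
  rw [Finset.card_singleton] at u1
  omega

/-- What is known about a configuration from which `f` halts. -/
def Out (f : Fin 3 × Bool → Option (Fin 3 × Bool × Dir)) (q : Fin 3) (L : List Bool) (s : Bool)
    (R : List Bool) (K : ℕ) : Prop :=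
  ∃ r, Stay f q s r ∧ (r = none → K ≤ ones L + ones R + 1) ∧
    ∀ t, r = some t → ∃ N, K ≤ N ∧ HaltsWith (mach f) t.st (mv L R t.wr t.dr).1
      (mv L R t.wr t.dr).2.1 (mv L R t.wr t.dr).2.2 N

theorem Out.halts {f : Fin 3 × Bool → Option (Fin 3 × Bool × Dir)} {q : Fin 3} {L : List Bool}
    {s : Bool} {R : List Bool} {K : ℕ} (h : Out f q L s R K) :
    ∃ N, K ≤ N ∧ HaltsWith (mach f) (enc q) L s R N := by
  obtain ⟨r, h1, h2, h3⟩ := h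
  have hm := mach_eq h1
  cases r with
  | none => exact ⟨_, h2 rfl, HaltsWith.halt hm⟩
  | some t =>
    obtain ⟨N, h4, h5⟩ := h3 t rfl
    exact ⟨N, h4, HaltsWith.step t hm h5⟩

theorem bridge (f : Fin 3 × Bool → Option (Fin 3 × Bool × Dir)) (w : List Bool) (n : ℕ) :
    ∀ (c c' : Cfg (Fin 3)) (L R : List Bool), stepsTM f n c = some c' → Halted f c' →
    TapeWord c'.tape w → Rep c.tape c.head L R →
    Out f c.state L (c.tape c.head) R (w.count true) := by
  induction n with
  | zero =>
    intro c c' L R h hh hw hr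
    have e : c = c' := by simpa [stepsTM] using h
    subst e
    exact ⟨none, Stay.halt hh, fun _ => word_le hr hw, fun t ht => by cases ht⟩
  | succ n ih =>
    intro c c' L R h hh hw hr
    unfold stepsTM at h
    rcases hf : f (c.state, c.tape c.head) with _ | ⟨q', v, d⟩
    · simp [stepTM, hf] at h
    · simp only [stepTM, hf, Option.map_some, Option.bind_some] at h
      cases d with
      | left =>
        obtain ⟨r1, r2⟩ := hr.left v
        have := (ih _ c' _ _ h hh hw r1).halts
        simp only [Dir.move] at this
        rw [r2] at this
        exact ⟨_, Stay.left hf, fun h => (by cases h), fun t ht => (by cases ht; exact this)⟩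
      | right =>
        obtain ⟨r1, r2⟩ := hr.right v
        have := (ih _ c' _ _ h hh hw r1).halts
        simp only [Dir.move] at this
        rw [r2] at this
        exact ⟨_, Stay.right hf, fun h => (by cases h), fun t ht => (by cases ht; exact this)⟩
      | stay =>
        simp only [Dir.move, add_zero] at h
        have := ih _ c' _ _ h hh hw (hr.stay v)
        simp only [Function.update_self] at this
        obtain ⟨r, s1, s2, s3⟩ := this
        exact ⟨r, Stay.stay hf s1, s2, s3⟩

/-- A machine producing six ones. -/
def champ : Fin 3 × Bool → Option (Fin 3 × Bool × Dir)
  | (0, false) => some (1, true, .right)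
  | (0, true) => none
  | (1, false) => some (2, false, .right)
  | (1, true) => some (1, true, .right)
  | (2, false) => some (2, true, .left)
  | (2, true) => some (0, true, .left)

end BB3

/-- BB(3) = 6: among all Turing machines with at most 3 states
(in the model without a separate halting state) that halt on the all-zero
tape, the maximum number of 1s in the computed word is exactly 6. -/
theorem busy_beaver_3 :
    IsGreatest
      {m : ℕ |
        ∃ (f : Fin 3 × Bool → Option (Fin 3 × Bool × Dir)) (w : List Bool) (t : ℕ),
          Computes f 0 w t ∧ w.count true = m} 6 := by
  constructor
  · refine ⟨BB3.champ, [true, true, true, true, true, true], 13, ?_, by decide⟩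
    refine ⟨_, rfl, rfl, -1, ?_, ?_, ?_⟩
    · decide
    · intro j hj
      simp only [Function.update_apply] at hj
      by_contra hc
      simp at hc
      revert hj
      simp [initCfg, Dir.move]
      grind
    · intro _
      exact ⟨rfl, rfl⟩
  · rintro m ⟨f, w, t, ⟨c, h1, h2, h3⟩, rfl⟩
    obtain ⟨N, hN, hh⟩ := (BB3.bridge f w t (initCfg 0) c [] [] h1 h2 h3
      ⟨fun k => by simp [initCfg], fun k => by simp [initCfg]⟩).halts
    exact hN.trans (BB3.bound hh)
end

section
/- Card(M_BB(3)) = 44: there are exactly 44 Turing machines with at most 3 states (in the model without a separate halting state) that halt on the all-zero tape with a computed word containing exactly BB(3) = 6 ones. -/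
/-! ### Finite representation of machines -/

inductive St | a | b | c
  deriving DecidableEq

instance : DecidableEq Dir := fun x y => by
  cases x <;> cases y <;> first | exact isTrue rfl | exact isFalse (fun h => nomatch h)

/-- Table entries; `u` is undefined. -/
inductive Ent
  | u
  | t (q : St) (w : Bool) (d : Dir)
  deriving DecidableEq

structure Tab where
  a0 : Ent
  a1 : Ent
  b0 : Ent
  b1 : Ent
  c0 : Ent
  c1 : Ent
  deriving DecidableEq

noncomputable def iff' {α : Type} (x : Bool) (y z : α) : α := Bool.rec z y x
noncomputable def aand (x y : Bool) : Bool := Bool.rec false y x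
noncomputable def oor (x y : Bool) : Bool := Bool.rec y true x

@[simp] theorem iff'_eq {α : Type} (x : Bool) (y z : α) :
    iff' x y z = if x then y else z := by cases x <;> rfl
@[simp] theorem aand_eq (x y : Bool) : aand x y = (x && y) := by cases x <;> rfl
@[simp] theorem oor_eq (x y : Bool) : oor x y = (x || y) := by cases x <;> rfl

/-- Evaluate the number before continuing (for kernel evaluation). -/
noncomputable def force {α : Type} (n : ℕ) (k : ℕ → α) : α :=
  Nat.rec (k 0) (fun m _ => k (Nat.succ m)) n

@[simp] theorem force_eq {α : Type} (n : ℕ) (k : ℕ → α) : force n k = k n := by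
  cases n <;> rfl

noncomputable def St.sel {α : Type} (q : St) (x y z : α) : α := St.rec x y z q

noncomputable def Tab.get (T : Tab) (q : St) (s : Bool) : Ent :=
  Tab.rec (fun a0 a1 b0 b1 c0 c1 =>
    St.rec (Bool.rec a0 a1 s) (Bool.rec b0 b1 s) (Bool.rec c0 c1 s) q) T

noncomputable def Tab.set (T : Tab) (q : St) (s : Bool) (e : Ent) : Tab :=
  Tab.rec (fun a0 a1 b0 b1 c0 c1 =>
    St.rec (Bool.rec ⟨e, a1, b0, b1, c0, c1⟩ ⟨a0, e, b0, b1, c0, c1⟩ s)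
      (Bool.rec ⟨a0, a1, e, b1, c0, c1⟩ ⟨a0, a1, b0, e, c0, c1⟩ s)
      (Bool.rec ⟨a0, a1, b0, b1, e, c1⟩ ⟨a0, a1, b0, b1, c0, e⟩ s) q) T

theorem Tab.get_set (T : Tab) (q : St) (s : Bool) (e : Ent) (q' : St) (s' : Bool) :
    (T.set q s e).get q' s' = if q' = q ∧ s' = s then e else T.get q' s' := by
  obtain ⟨a0, a1, b0, b1, c0, c1⟩ := T
  cases q <;> cases s <;> cases q' <;> cases s' <;> rfl

theorem Tab.ext_get {T U : Tab} (h : ∀ q s, T.get q s = U.get q s) : T = U := by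
  obtain ⟨a0, a1, b0, b1, c0, c1⟩ := T
  obtain ⟨a0', a1', b0', b1', c0', c1'⟩ := U
  have h1 : a0 = a0' := h .a false
  have h2 : a1 = a1' := h .a true
  have h3 : b0 = b0' := h .b false
  have h4 : b1 = b1' := h .b true
  have h5 : c0 = c0' := h .c false
  have h6 : c1 = c1' := h .c true
  subst h1 h2 h3 h4 h5 h6
  rfl

/-- First symbol of a half tape. -/
noncomputable def hd (l : List Bool) : Bool := List.rec false (fun x _ _ => x) l
noncomputable def tl (l : List Bool) : List Bool := List.rec [] (fun _ x _ => x) l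

@[simp] theorem hd_nil : hd [] = false := rfl
@[simp] theorem tl_nil : tl [] = [] := rfl
@[simp] theorem hd_cons (x l) : hd (x :: l) = x := rfl
@[simp] theorem tl_cons (x l) : tl (x :: l) = l := rfl

/-- Number of ones of a half tape. -/
noncomputable def cnt (l : List Bool) : ℕ :=
  List.rec 0 (fun x _ n => Bool.rec n (Nat.succ n) x) l

theorem cnt_eq (l : List Bool) : cnt l = l.count true := by
  induction l with
  | nil => rfl
  | cons x l ih =>
    cases x
    · show cnt l = _
      simp [ih]
    · show Nat.succ (cnt l) = _
      simp [ih]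

noncomputable def score (l : List Bool) (s : Bool) (r : List Bool) : ℕ :=
  Nat.add (cnt l) (cnt (s :: r))

/-- Configurations: state, left half tape, scanned symbol, right half tape. -/
structure LC where
  q : St
  l : List Bool
  s : Bool
  r : List Bool

def LC.start : LC := ⟨.a, [], false, []⟩

noncomputable def mv (q' : St) (w : Bool) (d : Dir) (c : LC) : LC :=
  match d with
  | .left => ⟨q', tl c.l, hd c.l, w :: c.r⟩
  | .stay => ⟨q', c.l, w, c.r⟩
  | .right => ⟨q', w :: c.l, hd c.r, tl c.r⟩

/-- `M` halts from the given configuration after `n` steps with exactly six ones. -/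
inductive Bad (M : Tab) : ℕ → LC → Prop
  | halt {c} : M.get c.q c.s = .u → score c.l c.s c.r = 6 → Bad M 0 c
  | step {n c q' w d} : M.get c.q c.s = .t q' w d → Bad M n (mv q' w d c) → Bad M (n + 1) c

/-- The pair `(q, s)` is visited from the given configuration. -/
inductive Visits (M : Tab) (q : St) (s : Bool) : LC → Prop
  | here {c} : c.q = q → c.s = s → Visits M q s c
  | step {c q' w d} : M.get c.q c.s = .t q' w d → Visits M q s (mv q' w d c) → Visits M q s c

def Extn (T M : Tab) : Prop := ∀ q s, T.get q s ≠ .u → M.get q s = T.get q s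

theorem Bad.of_step {M : Tab} {n c q' w d} (h : Bad M n c) (hg : M.get c.q c.s = .t q' w d) :
    ∃ m, n = m + 1 ∧ Bad M m (mv q' w d c) := by
  cases h with
  | halt h1 h2 => rw [hg] at h1; cases h1
  | step h1 h2 => rw [hg] at h1; cases h1; exact ⟨_, rfl, h2⟩

theorem Bad.of_halt {M : Tab} {n c} (h : Bad M n c) (hg : M.get c.q c.s = .u) :
    score c.l c.s c.r = 6 := by
  cases h with
  | halt h1 h2 => exact h2
  | step h1 h2 => rw [hg] at h1; cases h1

theorem not_bad_of_inv {M : Tab} (I : LC → Prop)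
    (h : ∀ c, I c → ∃ q' w d, M.get c.q c.s = .t q' w d ∧ I (mv q' w d c))
    {n c} (hi : I c) : ¬ Bad M n c := by
  intro hb
  induction hb with
  | halt h1 h2 => obtain ⟨q', w, d, h3, h4⟩ := h _ hi; rw [h1] at h3; cases h3
  | step h1 h2 ih =>
    obtain ⟨q', w, d, h3, h4⟩ := h _ hi
    rw [h1] at h3; cases h3; exact ih h4

/-! ### Removing `stay` moves -/

theorem shortcut_weak {M : Tab} {q s q' w q2 w2 d2} (h1 : M.get q s = .t q' w .stay)
    (h2 : M.get q' w = .t q2 w2 d2) : ∀ n c, Bad M n c →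
      ∃ m, m ≤ n ∧ (c.q = q → c.s = s → m < n) ∧ Bad (M.set q s (.t q2 w2 d2)) m c := by
  intro n
  induction n using Nat.strong_induction_on with
  | _ n ih =>
    intro c hb
    by_cases hc : c.q = q ∧ c.s = s
    · obtain ⟨hq, hs⟩ := hc
      obtain ⟨n1, rfl, hb1⟩ := hb.of_step (by rw [hq, hs]; exact h1)
      obtain ⟨n2, rfl, hb2⟩ := hb1.of_step h2
      obtain ⟨m, hm, -, hb3⟩ := ih n2 (by omega) _ hb2
      refine ⟨m + 1, by omega, fun _ _ => by omega, ?_⟩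
      refine Bad.step (q' := q2) (w := w2) (d := d2) (by rw [Tab.get_set, if_pos ⟨hq, hs⟩]) ?_
      cases d2 <;> exact hb3
    · cases hb with
      | halt h3 h4 =>
        refine ⟨0, le_refl _, fun h h' => absurd ⟨h, h'⟩ hc, Bad.halt ?_ h4⟩
        rw [Tab.get_set, if_neg hc, h3]
      | @step n' _ q3 w3 d3 h3 h4 =>
        obtain ⟨m, hm, -, hb3⟩ := ih n' (by omega) _ h4
        refine ⟨m + 1, by omega, fun h h' => absurd ⟨h, h'⟩ hc, Bad.step ?_ hb3⟩
        rw [Tab.get_set, if_neg hc, h3]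

theorem shortcut_strict {M : Tab} {q s q' w q2 w2 d2} (h1 : M.get q s = .t q' w .stay)
    (h2 : M.get q' w = .t q2 w2 d2) {c} (hv : Visits M q s c) : ∀ n, Bad M n c →
      ∃ m, m < n ∧ Bad (M.set q s (.t q2 w2 d2)) m c := by
  induction hv with
  | here hq hs =>
    intro n hb
    obtain ⟨m, _, hm, hb'⟩ := shortcut_weak h1 h2 n _ hb
    exact ⟨m, hm hq hs, hb'⟩
  | @step c q3 w3 d3 h3 h4 ih =>
    intro n hb
    by_cases hc : c.q = q ∧ c.s = s
    · obtain ⟨m, _, hm, hb'⟩ := shortcut_weak h1 h2 n _ hb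
      exact ⟨m, hm hc.1 hc.2, hb'⟩
    · obtain ⟨n1, rfl, hb1⟩ := hb.of_step h3
      obtain ⟨m, hm, hb'⟩ := ih n1 hb1
      refine ⟨m + 1, by omega, Bad.step ?_ hb'⟩
      rw [Tab.get_set, if_neg hc, h3]

/-! ### Quick decider -/

noncomputable def Ent.isDef (e : Ent) : Bool := Ent.rec false (fun _ _ _ => true) e

theorem Ent.isDef_iff (e : Ent) : e.isDef = true ↔ e ≠ .u := by
  cases e
  · simp [Ent.isDef]
  · simp [Ent.isDef]

noncomputable def okEnt (T : Tab) (e : Ent) : Bool :=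
  Ent.rec true (fun q w d =>
    Dir.rec (aand (T.get q false).isDef (T.get q true).isDef) (T.get q w).isDef
      (aand (T.get q false).isDef (T.get q true).isDef) d) e

noncomputable def quick (T : Tab) : Bool :=
  aand (okEnt T (T.get .a false)) <| aand (okEnt T (T.get .a true)) <|
  aand (okEnt T (T.get .b false)) <| aand (okEnt T (T.get .b true)) <|
  aand (okEnt T (T.get .c false)) <| aand (okEnt T (T.get .c true)) <|
  (T.get .a false).isDef

theorem quick_sound {T M : Tab} (h : quick T = true) (hE : Extn T M) :
    ∀ n, ¬ Bad M n LC.start := by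
  intro n
  simp only [quick, aand_eq, Bool.and_eq_true] at h
  have hall : ∀ q s, okEnt T (T.get q s) = true := by
    intro q s; cases q <;> cases s <;> simp only [h]
  refine not_bad_of_inv (fun c => (T.get c.q c.s).isDef = true) ?_ h.2.2.2.2.2.2
  rintro ⟨q, l, s, r⟩ hi
  simp only at hi ⊢
  rw [Ent.isDef_iff] at hi
  have h1 := hall q s
  rw [hE q s hi]
  cases he : T.get q s with
  | u => exact absurd he hi
  | t q' w d =>
    refine ⟨q', w, d, rfl, ?_⟩
    rw [he] at h1
    cases d
    · have h2 : aand (T.get q' false).isDef (T.get q' true).isDef = true := h1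
      simp only [aand_eq, Bool.and_eq_true] at h2
      show (T.get q' (hd l)).isDef = true
      cases hd l <;> simp [h2]
    · exact h1
    · have h2 : aand (T.get q' false).isDef (T.get q' true).isDef = true := h1
      simp only [aand_eq, Bool.and_eq_true] at h2
      show (T.get q' (hd r)).isDef = true
      cases hd r <;> simp [h2]

/-! ### Pushdown abstraction decider -/

noncomputable def tb (W i : ℕ) : Bool := Nat.beq (Nat.land (Nat.shiftRight W i) 1) 1
noncomputable def setb (W i : ℕ) : ℕ := Nat.lor W (Nat.shiftLeft 1 i)

theorem tb_eq (W i : ℕ) : tb W i = W.testBit i := by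
  show Nat.beq ((W >>> i) &&& 1) 1 = _
  have h1 : (W >>> i) &&& 1 = (W >>> i) % 2 := Nat.and_one_is_mod _
  have h2 : W.testBit i = decide ((W >>> i) % 2 = 1) := by
    rw [Nat.testBit_eq_decide_div_mod_eq, Nat.shiftRight_eq_div_pow]
  rw [h1, h2]
  rcases Nat.mod_two_eq_zero_or_one (W >>> i) with h | h <;> rw [h] <;> rfl

def BSub (W V : ℕ) : Prop := ∀ i, W.testBit i = true → V.testBit i = true

theorem BSub.refl (W : ℕ) : BSub W W := fun _ h => h
theorem BSub.trans {U V W : ℕ} (h : BSub U V) (h' : BSub V W) : BSub U W :=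
  fun i hi => h' i (h i hi)
theorem BSub.antisymm {W V : ℕ} (h : BSub W V) (h' : BSub V W) : W = V := by
  apply Nat.eq_of_testBit_eq
  intro i
  rw [Bool.eq_iff_iff]
  exact ⟨h i, h' i⟩

theorem setb_testBit (W i j : ℕ) : (setb W i).testBit j = (W.testBit j || decide (i = j)) := by
  show (W ||| (1 <<< i)).testBit j = _
  rw [Nat.testBit_or, Nat.one_shiftLeft, Nat.testBit_two_pow]

theorem sub_setb (W i : ℕ) : BSub W (setb W i) := by
  intro j h; rw [setb_testBit, h]; rfl

theorem setb_fix {W i : ℕ} (h : setb W i = W) : W.testBit i = true := by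
  rw [← h, setb_testBit]; simp

noncomputable def loopN (n : ℕ) (body : ℕ → ℕ → ℕ) (W : ℕ) : ℕ :=
  Nat.rec (motive := fun _ => ℕ → ℕ) (fun W => W)
    (fun i ih W => force (body i W) ih) n W

theorem loopN_succ (n body W) : loopN (n + 1) body W = loopN n body (body n W) :=
  force_eq _ _

theorem sub_loopN {body : ℕ → ℕ → ℕ} (hb : ∀ i W, BSub W (body i W)) (n W : ℕ) :
    BSub W (loopN n body W) := by
  induction n generalizing W with
  | zero => exact BSub.refl _
  | succ n ih => rw [loopN_succ]; exact (hb n W).trans (ih _)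

theorem loopN_fix {body : ℕ → ℕ → ℕ} (hb : ∀ i W, BSub W (body i W)) {n W : ℕ}
    (h : loopN n body W = W) : ∀ i < n, body i W = W := by
  induction n with
  | zero => intro i hi; omega
  | succ n ih =>
    rw [loopN_succ] at h
    have h1 : body n W = W := by
      apply BSub.antisymm _ (hb n W)
      have := sub_loopN hb n (body n W)
      rwa [h] at this
    rw [h1] at h
    intro i hi
    rcases Nat.lt_succ_iff_lt_or_eq.mp hi with hi | rfl
    · exact ih h i hi
    · exact h1

theorem comp_fix {f g : ℕ → ℕ} (hf : ∀ W, BSub W (f W)) (hg : ∀ W, BSub W (g W)) {W : ℕ}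
    (h : g (f W) = W) : f W = W ∧ g W = W := by
  have h1 : f W = W := by
    apply BSub.antisymm _ (hf W)
    have := hg (f W)
    rwa [h] at this
  rw [h1] at h
  exact ⟨h1, h⟩

noncomputable def b2n (s : Bool) : ℕ := Bool.rec 0 1 s

/-- Bit index of the start of the block of a (state, symbol) pair. -/
noncomputable def off (q : St) (s : Bool) : ℕ :=
  St.rec (Bool.rec 0 64 s) (Bool.rec 128 192 s) (Bool.rec 256 320 s) q

noncomputable def cidx (q : St) (s : Bool) (x y : ℕ) : ℕ :=
  Nat.add (off q s) (Nat.add (Nat.mul 8 x) y)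
noncomputable def lidx (x : ℕ) (s : Bool) : ℕ := 
  Bool.rec (Nat.add 384 (Nat.mul 8 x)) (Nat.add 448 (Nat.mul 8 x)) s
noncomputable def ridx (x : ℕ) (s : Bool) : ℕ := Bool.rec (Nat.add 512 x) (Nat.add 520 x) s

/-- Transition of a finite automaton given by two octal tables. -/
noncomputable def dl (K t0 t1 x : ℕ) (s : Bool) : ℕ :=
  Nat.mod (Nat.land (Nat.shiftRight (Bool.rec t0 t1 s) (Nat.mul 3 x)) 7) K

/-- Preimage masks of the automaton for the right (left) half tape. -/
noncomputable def preR (p0 p1 y : ℕ) (z : Bool) : ℕ :=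
  Nat.land (Nat.shiftRight (Bool.rec p0 p1 z) (Nat.mul 8 y)) 255
noncomputable def preL (p0 p1 x : ℕ) (z : Bool) : ℕ :=
  Nat.land (Nat.shiftRight (Bool.rec p0 p1 z) (Nat.mul 64 x)) 18446744073709551615

/-- A pair of automata, for the left and the right half tape, with preimage masks. -/
structure Dfa where
  K : ℕ
  l0 : ℕ
  l1 : ℕ
  r0 : ℕ
  r1 : ℕ
  pl0 : ℕ
  pl1 : ℕ
  pr0 : ℕ
  pr1 : ℕ

def Dfa.Ok (D : Dfa) : Prop :=
  0 < D.K ∧ D.K ≤ 8 ∧ dl D.K D.l0 D.l1 0 false = 0 ∧ dl D.K D.r0 D.r1 0 false = 0 ∧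
  ∀ i < D.K, ∀ z, (preL D.pl0 D.pl1 (dl D.K D.l0 D.l1 i z) z).testBit (8 * i) = true ∧
    (preR D.pr0 D.pr1 (dl D.K D.r0 D.r1 i z) z).testBit i = true

noncomputable def Dfa.chk (D : Dfa) : Bool :=
  Nat.ble 1 D.K && Nat.ble D.K 8 && Nat.beq (dl D.K D.l0 D.l1 0 false) 0 &&
  Nat.beq (dl D.K D.r0 D.r1 0 false) 0 && (List.range D.K).all fun i =>
    [false, true].all fun z => (preL D.pl0 D.pl1 (dl D.K D.l0 D.l1 i z) z).testBit (8 * i) &&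
    (preR D.pr0 D.pr1 (dl D.K D.r0 D.r1 i z) z).testBit i

theorem Dfa.chk_ok {D : Dfa} (h : D.chk = true) : D.Ok := by
  simp only [Dfa.chk, Bool.and_eq_true, List.all_eq_true, List.mem_range] at h
  obtain ⟨⟨⟨⟨h1, h2⟩, h3⟩, h4⟩, h5⟩ := h
  refine ⟨Nat.le_of_ble_eq_true h1, Nat.le_of_ble_eq_true h2, Nat.eq_of_beq_eq_true h3,
    Nat.eq_of_beq_eq_true h4, fun i hi z => h5 i hi z (by cases z <;> simp)⟩

/-- Add the facts in the mask `m`, shifted by `k`. -/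
noncomputable def orsh (W m k : ℕ) : ℕ := Nat.lor W (Nat.shiftLeft m k)

theorem sub_orsh (W m k : ℕ) : BSub W (orsh W m k) := by
  intro j h
  show (W ||| (m <<< k)).testBit j = true
  rw [Nat.testBit_or, h]; rfl

theorem orsh_fix {W m k i : ℕ} (h : orsh W m k = W) (hi : m.testBit i = true) :
    W.testBit (k + i) = true := by
  rw [← h]
  show (W ||| (m <<< k)).testBit (k + i) = true
  rw [Nat.testBit_or, Nat.testBit_shiftLeft]
  simp [hi]

noncomputable def popR (p0 p1 : ℕ) (q : St) (x y : ℕ) (z : Bool) (W : ℕ) : ℕ :=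
  orsh W (Nat.land (Nat.shiftRight W (ridx 0 z)) (preR p0 p1 y z))
    (Nat.add (off q z) (Nat.mul 8 x))
noncomputable def popL (p0 p1 : ℕ) (q : St) (x y : ℕ) (z : Bool) (W : ℕ) : ℕ :=
  orsh W (Nat.land (Nat.shiftRight W (lidx 0 z)) (preL p0 p1 x z)) (Nat.add (off q z) y)

noncomputable def cell (D : Dfa) (q : St) (s : Bool) (e : Ent) (x y W : ℕ) : ℕ :=
  iff' (tb W (cidx q s x y))
    (Dfa.rec (fun K l0 l1 r0 r1 pl0 pl1 pr0 pr1 =>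
    Ent.rec (setb W 528) (fun q' w d =>
      Dir.rec
        (force (dl K r0 r1 y w) fun y' => force (setb W (ridx y w)) fun W =>
          force (popL pl0 pl1 q' x y' false W) fun W => popL pl0 pl1 q' x y' true W)
        (setb W (cidx q' w x y))
        (force (dl K l0 l1 x w) fun x' => force (setb W (lidx x w)) fun W =>
          force (popR pr0 pr1 q' x' y false W) fun W => popR pr0 pr1 q' x' y true W)
        d) e) D) W

theorem sub_popR (p0 p1 q x y z W) : BSub W (popR p0 p1 q x y z W) := sub_orsh _ _ _

theorem sub_popL (p0 p1 q x y z W) : BSub W (popL p0 p1 q x y z W) := sub_orsh _ _ _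

theorem ridx_eq (i z) : ridx i z = ridx 0 z + i := by cases z <;> rfl
theorem lidx_eq (i z) : lidx i z = lidx 0 z + 8 * i := by cases z <;> rfl

theorem popR_fix {p0 p1 q x y z i W} (h : popR p0 p1 q x y z W = W)
    (h1 : W.testBit (ridx i z) = true) (h2 : (preR p0 p1 y z).testBit i = true) :
    W.testBit (cidx q z x i) = true := by
  have := orsh_fix (i := i) h (by
    show ((W >>> ridx 0 z) &&& preR p0 p1 y z).testBit i = true
    rw [Nat.testBit_and, Nat.testBit_shiftRight, ← ridx_eq, h1, h2]; rfl)
  have e : cidx q z x i = Nat.add (off q z) (Nat.mul 8 x) + i := by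
    show off q z + (8 * x + i) = off q z + 8 * x + i
    omega
  rw [e]; exact this

theorem popL_fix {p0 p1 q x y z i W} (h : popL p0 p1 q x y z W = W)
    (h1 : W.testBit (lidx i z) = true) (h2 : (preL p0 p1 x z).testBit (8 * i) = true) :
    W.testBit (cidx q z i y) = true := by
  have := orsh_fix (i := 8 * i) h (by
    show ((W >>> lidx 0 z) &&& preL p0 p1 x z).testBit (8 * i) = true
    rw [Nat.testBit_and, Nat.testBit_shiftRight, ← lidx_eq, h1, h2]; rfl)
  have e : cidx q z i y = Nat.add (off q z) y + 8 * i := by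
    show off q z + (8 * i + y) = off q z + y + 8 * i
    omega
  rw [e]; exact this

theorem sub_cell (D q s e x y W) : BSub W (cell D q s e x y W) := by
  unfold cell; rw [iff'_eq]; split
  · cases e with
    | u => exact sub_setb _ _
    | t q' w d =>
      cases d <;> simp only [force_eq]
      · exact (sub_setb _ _).trans ((sub_popL _ _ _ _ _ _ _).trans (sub_popL _ _ _ _ _ _ _))
      · exact sub_setb _ _
      · exact (sub_setb _ _).trans ((sub_popR _ _ _ _ _ _ _).trans (sub_popR _ _ _ _ _ _ _))
  · exact BSub.refl _

/-- Closure property of a set of facts. -/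
def CellOk (D : Dfa) (e : Ent) (x y W : ℕ) : Prop :=
  match e with
  | .u => W.testBit 528 = true
  | .t q' w .stay => W.testBit (cidx q' w x y) = true
  | .t q' w .right => W.testBit (lidx x w) = true ∧ ∀ z, ∀ i < D.K,
      W.testBit (ridx i z) = true → dl D.K D.r0 D.r1 i z = y →
        W.testBit (cidx q' z (dl D.K D.l0 D.l1 x w) i) = true
  | .t q' w .left => W.testBit (ridx y w) = true ∧ ∀ z, ∀ i < D.K,
      W.testBit (lidx i z) = true → dl D.K D.l0 D.l1 i z = x →
        W.testBit (cidx q' z i (dl D.K D.r0 D.r1 y w)) = true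

theorem cell_fix {D : Dfa} (hD : D.Ok) {q s e x y W} (h : cell D q s e x y W = W)
    (hb : W.testBit (cidx q s x y) = true) : CellOk D e x y W := by
  unfold cell at h
  rw [iff'_eq, tb_eq, hb, if_pos rfl] at h
  obtain ⟨_, _, _, _, hD⟩ := hD
  cases e with
  | u => exact setb_fix h
  | t q' w d =>
    cases d <;> simp only [force_eq] at h
    · obtain ⟨h12, h3⟩ := comp_fix
        (f := fun W => popL D.pl0 D.pl1 q' x (dl D.K D.r0 D.r1 y w) false (setb W (ridx y w)))
        (g := popL D.pl0 D.pl1 q' x (dl D.K D.r0 D.r1 y w) true)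
        (fun W => (sub_setb _ _).trans (sub_popL _ _ _ _ _ _ _))
        (fun W => sub_popL _ _ _ _ _ _ _) h
      obtain ⟨h1, h2⟩ := comp_fix (f := fun W => setb W (ridx y w))
        (g := popL D.pl0 D.pl1 q' x (dl D.K D.r0 D.r1 y w) false)
        (fun W => sub_setb _ _)
        (fun W => sub_popL _ _ _ _ _ _ _) h12
      refine ⟨setb_fix h1, ?_⟩
      intro z i hi h4 h5
      have h6 := (hD i hi z).1
      rw [h5] at h6
      cases z
      · exact popL_fix h2 h4 h6
      · exact popL_fix h3 h4 h6
    · exact setb_fix h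
    · obtain ⟨h12, h3⟩ := comp_fix
        (f := fun W => popR D.pr0 D.pr1 q' (dl D.K D.l0 D.l1 x w) y false (setb W (lidx x w)))
        (g := popR D.pr0 D.pr1 q' (dl D.K D.l0 D.l1 x w) y true)
        (fun W => (sub_setb _ _).trans (sub_popR _ _ _ _ _ _ _))
        (fun W => sub_popR _ _ _ _ _ _ _) h
      obtain ⟨h1, h2⟩ := comp_fix (f := fun W => setb W (lidx x w))
        (g := popR D.pr0 D.pr1 q' (dl D.K D.l0 D.l1 x w) y false)
        (fun W => sub_setb _ _)
        (fun W => sub_popR _ _ _ _ _ _ _) h12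
      refine ⟨setb_fix h1, ?_⟩
      intro z i hi h4 h5
      have h6 := (hD i hi z).2
      rw [h5] at h6
      cases z
      · exact popR_fix h2 h4 h6
      · exact popR_fix h3 h4 h6

noncomputable def row (T : Tab) (D : Dfa) (q : St) (s : Bool) (W : ℕ) : ℕ :=
  iff' (Nat.beq (Nat.land (Nat.shiftRight W (off q s)) 18446744073709551615) 0) W
    (loopN D.K (fun x W => loopN D.K (fun y W => cell D q s (T.get q s) x y W) W) W)

theorem sub_row (T D q s W) : BSub W (row T D q s W) := by
  unfold row
  rw [iff'_eq]
  split
  · exact BSub.refl _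
  · exact sub_loopN (fun _ _ => sub_loopN (fun _ _ => sub_cell _ _ _ _ _ _ _) _ _) _ _

theorem row_fix {T} {D : Dfa} (hD : D.Ok) {q s W} (h : row T D q s W = W) :
    ∀ x < D.K, ∀ y < D.K, W.testBit (cidx q s x y) = true → CellOk D (T.get q s) x y W := by
  intro x hx y hy hb
  unfold row at h
  rw [iff'_eq] at h
  split at h
  · rename_i h0
    exfalso
    have h1 : (W >>> (off q s)) &&& (2 ^ 64 - 1) = 0 := Nat.eq_of_beq_eq_true h0
    have h2 : ((W >>> (off q s)) &&& (2 ^ 64 - 1)).testBit (8 * x + y) = true := by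
      have hK := hD.2.1
      rw [Nat.testBit_and, Nat.testBit_shiftRight, Nat.testBit_two_pow_sub_one,
        show off q s + (8 * x + y) = cidx q s x y from rfl, hb]
      simp; omega
    rw [h1] at h2
    simp at h2
  · have h1 := loopN_fix
      (fun _ _ => sub_loopN (fun _ _ => sub_cell _ _ _ _ _ _ _) _ _) h x hx
    have h2 := loopN_fix (fun _ _ => sub_cell _ _ _ _ _ _ _) h1 y hy
    exact cell_fix hD h2 hb

noncomputable def onePass (T : Tab) (D : Dfa) (W : ℕ) : ℕ :=
  force (row T D .a false W) fun W =>
  force (row T D .a true W) fun W =>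
  force (row T D .b false W) fun W =>
  force (row T D .b true W) fun W =>
  force (row T D .c false W) fun W =>
  row T D .c true W

theorem onePass_fix {T D W} (h : onePass T D W = W) :
    ∀ q s, row T D q s W = W := by
  simp only [onePass, force_eq] at h
  have hr := sub_row T D
  generalize row T D = R at *
  obtain ⟨h, h6⟩ := comp_fix (f := fun W => R .c false (R .b true (R .b false (R .a true
    (R .a false W))))) (g := R .c true) (fun W => (hr _ _ _).trans ((hr _ _ _).trans
      ((hr _ _ _).trans ((hr _ _ _).trans (hr _ _ _))))) (fun W => hr _ _ _) h
  obtain ⟨h, h5⟩ := comp_fix (f := fun W => R .b true (R .b false (R .a true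
    (R .a false W)))) (g := R .c false) (fun W => (hr _ _ _).trans ((hr _ _ _).trans
      ((hr _ _ _).trans (hr _ _ _)))) (fun W => hr _ _ _) h
  obtain ⟨h, h4⟩ := comp_fix (f := fun W => R .b false (R .a true
    (R .a false W))) (g := R .b true) (fun W => (hr _ _ _).trans ((hr _ _ _).trans
      (hr _ _ _))) (fun W => hr _ _ _) h
  obtain ⟨h, h3⟩ := comp_fix (f := fun W => R .a true
    (R .a false W)) (g := R .b false) (fun W => (hr _ _ _).trans
      (hr _ _ _)) (fun W => hr _ _ _) h
  obtain ⟨h1, h2⟩ := comp_fix (f := R .a false) (g := R .a true)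
    (fun W => hr _ _ _) (fun W => hr _ _ _) h
  intro q s
  cases q <;> cases s <;> assumption

/-- Final test on a closed set of facts. -/
noncomputable def finTest (W : ℕ) : Bool :=
  aand (tb W 0) <| aand (tb W 384) <| aand (tb W 512) <| iff' (tb W 528) false true

noncomputable def pdaLoop (T : Tab) (D : Dfa) (n : ℕ) (W : ℕ) : Bool :=
  Nat.rec (motive := fun _ => ℕ → Bool) (fun _ => false)
    (fun _ ih W => force (onePass T D W) fun W' =>
      iff' (Nat.beq W' W) (finTest W) (iff' (tb W' 528) false (ih W'))) n W

noncomputable def pda (T : Tab) (D : Dfa) : Bool :=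
  pdaLoop T D 60 (setb (setb 1 384) 512)

theorem pdaLoop_closed {T D n W} (h : pdaLoop T D n W = true) :
    ∃ W, onePass T D W = W ∧ finTest W = true := by
  induction n generalizing W with
  | zero => exact absurd h (by simp [pdaLoop])
  | succ n ih =>
    have h' : force (onePass T D W) (fun W' =>
      iff' (Nat.beq W' W) (finTest W)
        (iff' (tb W' 528) false (pdaLoop T D n W'))) = true := h
    simp only [force_eq, iff'_eq] at h'
    split at h'
    · rename_i h1
      exact ⟨W, Nat.eq_of_beq_eq_true h1, h'⟩
    · split at h'
      · exact absurd h' (by simp)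
      · exact ih h'

def Stk (K t0 t1 W : ℕ) (idx : ℕ → Bool → ℕ) : List Bool → ℕ → Prop
  | [], x => x = 0
  | w :: l, x => ∃ y, Stk K t0 t1 W idx l y ∧ W.testBit (idx y w) = true ∧ dl K t0 t1 y w = x

theorem dl_lt {K t0 t1 x s} (hK : 0 < K) : dl K t0 t1 x s < K := Nat.mod_lt _ hK

theorem Stk.lt {K t0 t1 W idx l x} (hK : 0 < K) (h : Stk K t0 t1 W idx l x) : x < K := by
  cases l with
  | nil => rw [show x = 0 from h]; exact hK
  | cons w l => obtain ⟨y, _, _, rfl⟩ := h; exact dl_lt hK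

theorem Stk.pop {K t0 t1 W idx l x} (h0 : dl K t0 t1 0 false = 0)
    (h1 : W.testBit (idx 0 false) = true) (h : Stk K t0 t1 W idx l x) :
    ∃ y, Stk K t0 t1 W idx (tl l) y ∧ W.testBit (idx y (hd l)) = true ∧
      dl K t0 t1 y (hd l) = x := by
  cases l with
  | nil => rw [show x = 0 from h]; exact ⟨0, rfl, h1, h0⟩
  | cons w l => exact h

theorem pda_sound {T M : Tab} {D : Dfa} (hD : D.Ok) (h : pda T D = true)
    (hE : Extn T M) : ∀ n, ¬ Bad M n LC.start := by
  intro n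
  obtain ⟨W, hW, hf⟩ := pdaLoop_closed h
  have hrow := onePass_fix hW
  simp only [finTest, aand_eq, iff'_eq, Bool.and_eq_true, tb_eq] at hf
  obtain ⟨f1, f2, f3, f7⟩ := hf
  obtain ⟨hK, _, f4, f5, _⟩ := id hD
  have f7' : W.testBit 528 = false := by
    cases h : W.testBit 528
    · rfl
    · simp [h] at f7
  refine not_bad_of_inv (fun c => ∃ x y, Stk D.K D.l0 D.l1 W lidx c.l x ∧
    Stk D.K D.r0 D.r1 W ridx c.r y ∧ W.testBit (cidx c.q c.s x y) = true) ?_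
    ⟨0, 0, rfl, rfl, f1⟩
  rintro ⟨q, l, s, r⟩ ⟨x, y, hx, hy, hb⟩
  simp only at hx hy hb ⊢
  have hc := row_fix hD (hrow q s) x (hx.lt hK) y (hy.lt hK) hb
  cases he : T.get q s with
  | u =>
    rw [he] at hc
    exact absurd hc (by simp [CellOk, f7'])
  | t q' w d =>
    rw [he] at hc
    refine ⟨q', w, d, by rw [hE q s (by simp [he]), he], ?_⟩
    cases d
    · obtain ⟨c1, c2⟩ := hc
      obtain ⟨x', p1, p2, p3⟩ := hx.pop f4 f2
      exact ⟨x', _, p1, ⟨y, hy, c1, rfl⟩, c2 _ _ (p1.lt hK) p2 p3⟩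
    · exact ⟨x, y, hx, hy, hc⟩
    · obtain ⟨c1, c2⟩ := hc
      obtain ⟨y', p1, p2, p3⟩ := hy.pop f5 f3
      exact ⟨_, y', ⟨x, hx, c1, rfl⟩, p1, c2 _ _ (p1.lt hK) p2 p3⟩

def dfas : List Dfa := [
  ⟨2, 0, 9, 0, 9,
    257,
    4740813226943354765312,
    3, 768⟩,
  ⟨4, 1040, 1625, 1040, 1625,
    5709077883109771284479790501697483078193184769,
    105313898606601445688193569645762773481498826547809252750030536704,
    655365, 167773440⟩,
  ⟨7, 595336, 1272715, 595336, 1272715,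
    2582249878086908589655919172003011874329705792829223512830659356540743777138273460165263649716113212242761176095335120897,
    43492196880897913909153037437927119132862219771720049283802707330231074965984806166533402429532710580742200172428715740629041152,
    1125899913662977, 14645769776660992⟩,
  ⟨7, 305800, 886494, 305800, 886494,
    35835915874844867368919076489095108449946327955754392559861349553496776600288669637730260997676378095617,
    39402006196394479212279040100143613805079741044214363518397932706725177109004693293460379845975830268864370785124352,
    8796094358017, 281476822204432⟩,
  ⟨7, 1040, 1625, 444968, 1789361,
    5709077883109771284479790501697765656976490497,
    105313898606601445688193569645762773481498826547809535328813842432,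
    46248207859717, 30962316157649152⟩]

theorem dfas_ok : ∀ D ∈ dfas, D.Ok := by
  have h : (dfas.all Dfa.chk) = true := by decide +kernel
  intro D hD
  exact Dfa.chk_ok (List.all_eq_true.mp h D hD)

noncomputable def pdas (T : Tab) : Bool :=
  List.rec false (fun D _ ih => oor (pda T D) ih) dfas

theorem pdas_sound {T M : Tab} (h : pdas T = true) (hE : Extn T M) :
    ∀ n, ¬ Bad M n LC.start := by
  have key : ∀ L : List Dfa, (∀ D ∈ L, D.Ok) →
      (List.rec false (fun D _ ih => oor (pda T D) ih) L : Bool) = true →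
      ∀ n, ¬ Bad M n LC.start := by
    intro L
    induction L with
    | nil => intro _ h; exact absurd h (by simp)
    | cons D L ih =>
      intro hD h
      have h' : oor (pda T D) (List.rec false (fun D _ ih => oor (pda T D) ih) L) = true := h
      rw [oor_eq, Bool.or_eq_true] at h'
      rcases h' with h | h
      · exact pda_sound (hD D (by simp)) h hE
      · exact ih (fun D' h' => hD D' (by simp [h'])) h
  exact key dfas dfas_ok h

/-! ### Symmetries -/

def Dir.mir : Dir → Dir
  | .left => .right
  | .stay => .stay
  | .right => .left

def Ent.mir : Ent → Ent
  | .u => .u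
  | .t q w d => .t q w d.mir

def Tab.mir (T : Tab) : Tab := ⟨T.a0.mir, T.a1.mir, T.b0.mir, T.b1.mir, T.c0.mir, T.c1.mir⟩

def LC.mir (c : LC) : LC := ⟨c.q, c.r, c.s, c.l⟩

def St.swp : St → St
  | .a => .a
  | .b => .c
  | .c => .b

def Ent.swp : Ent → Ent
  | .u => .u
  | .t q w d => .t q.swp w d

def Tab.swp (T : Tab) : Tab := ⟨T.a0.swp, T.a1.swp, T.c0.swp, T.c1.swp, T.b0.swp, T.b1.swp⟩

def LC.swp (c : LC) : LC := ⟨c.q.swp, c.l, c.s, c.r⟩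

theorem Tab.mir_get (T : Tab) (q s) : T.mir.get q s = (T.get q s).mir := by
  cases q <;> cases s <;> rfl

theorem Tab.swp_get (T : Tab) (q s) : T.swp.get q.swp s = (T.get q s).swp := by
  cases q <;> cases s <;> rfl

theorem Ent.mir_mir (e : Ent) : e.mir.mir = e := by
  rcases e with _ | ⟨q, w, d⟩
  · rfl
  · cases d <;> rfl

theorem Ent.swp_swp (e : Ent) : e.swp.swp = e := by
  rcases e with _ | ⟨q, w, d⟩
  · rfl
  · cases q <;> rfl

theorem Tab.mir_mir (T : Tab) : T.mir.mir = T := by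
  simp [Tab.mir, Ent.mir_mir]

theorem Tab.swp_swp (T : Tab) : T.swp.swp = T := by
  simp [Tab.swp, Ent.swp_swp]

theorem score_eq (l s r) : score l s r = l.count true + (s :: r).count true := by
  show cnt l + cnt (s :: r) = _
  rw [cnt_eq, cnt_eq]

theorem Bad.mir {M : Tab} {n c} (h : Bad M n c) : Bad M.mir n c.mir := by
  induction h with
  | @halt c h1 h2 =>
    refine Bad.halt ?_ ?_
    · rw [Tab.mir_get]; show (M.get c.q c.s).mir = _; rw [h1]; rfl
    · rw [score_eq] at h2 ⊢
      simp only [List.count_cons, LC.mir] at h2 ⊢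
      omega
  | @step n c q' w d h1 h2 ih =>
    refine Bad.step (q' := q') (w := w) (d := d.mir) ?_ ?_
    · rw [Tab.mir_get]; show (M.get c.q c.s).mir = _; rw [h1]; rfl
    · cases d <;> exact ih

theorem Bad.swp {M : Tab} {n c} (h : Bad M n c) : Bad M.swp n c.swp := by
  induction h with
  | @halt c h1 h2 =>
    refine Bad.halt ?_ h2
    show M.swp.get c.q.swp c.s = _; rw [Tab.swp_get, h1]; rfl
  | @step n c q' w d h1 h2 ih =>
    refine Bad.step (q' := q'.swp) (w := w) (d := d) ?_ ?_
    · show M.swp.get c.q.swp c.s = _; rw [Tab.swp_get, h1]; rfl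
    · cases d <;> exact ih

noncomputable def popK (l : List Bool) (k : Bool → List Bool → Bool) : Bool :=
  List.rec (k false []) (fun x t _ => k x t) l

theorem popK_eq (l : List Bool) (k : Bool → List Bool → Bool) : popK l k = k (hd l) (tl l) := by
  cases l <;> rfl

/-! ### Recurrence decider -/

noncomputable def bEq (x y : Bool) : Bool := Bool.rec (Bool.rec true false y) y x

theorem bEq_eq {x y : Bool} (h : bEq x y = true) : x = y := by
  cases x <;> cases y <;> first | rfl | cases h

noncomputable def stEq (x y : St) : Bool :=
  St.rec (St.rec true false false y) (St.rec false true false y) (St.rec false false true y) x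

theorem stEq_eq {x y : St} (h : stEq x y = true) : x = y := by
  cases x <;> cases y <;> first | rfl | cases h

noncomputable def listEq (x : List Bool) : List Bool → Bool :=
  List.rec (motive := fun _ => List Bool → Bool) (fun y => List.rec true (fun _ _ _ => false) y)
    (fun h _ ih y => List.rec false (fun h' t _ => aand (bEq h h') (ih t)) y) x

theorem listEq_eq (x : List Bool) : ∀ y, listEq x y = true → x = y := by
  induction x with
  | nil => intro y h; cases y with
    | nil => rfl
    | cons _ _ => cases h
  | cons a x ih => intro y h; cases y with
    | nil => cases h
    | cons b y =>
      have h' : aand (bEq a b) (listEq x y) = true := h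
      rw [aand_eq, Bool.and_eq_true] at h'
      rw [bEq_eq h'.1, ih y h'.2]

noncomputable def isPre (x : List Bool) : List Bool → Bool :=
  List.rec (motive := fun _ => List Bool → Bool) (fun _ => true)
    (fun h _ ih y => List.rec false (fun h' t _ => aand (bEq h h') (ih t)) y) x

theorem isPre_eq (x : List Bool) : ∀ y, isPre x y = true → ∃ z, y = x ++ z := by
  induction x with
  | nil => intro y _; exact ⟨y, rfl⟩
  | cons a x ih => intro y h; cases y with
    | nil => cases h
    | cons b y =>
      have h' : aand (bEq a b) (isPre x y) = true := h
      rw [aand_eq, Bool.and_eq_true] at h'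
      obtain ⟨z, rfl⟩ := ih y h'.2
      rw [bEq_eq h'.1]
      exact ⟨z, rfl⟩

/-- Check whether the initial local configuration is met again. -/
noncomputable def same (q0 : St) (p0 : List Bool) (s0 : Bool) (r0 : List Bool)
    (k : St → List Bool → Bool → List Bool → Bool)
    (q : St) (l : List Bool) (s : Bool) (r : List Bool) : Bool :=
  oor (aand (stEq q q0) <| aand (bEq s s0) <| aand (listEq r r0) (isPre p0 l)) (k q l s r)

/-- Follow the machine, where the left half tape is only partially known. -/
noncomputable def walk (T : Tab) (q0 : St) (p0 : List Bool) (s0 : Bool) (r0 : List Bool)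
    (n : ℕ) : St → List Bool → Bool → List Bool → Bool :=
  Nat.rec (motive := fun _ => St → List Bool → Bool → List Bool → Bool)
    (fun _ _ _ _ => false)
    (fun _ ih q l s r => Ent.rec false (fun q' w d =>
      Dir.rec (List.rec false (fun h t _ => same q0 p0 s0 r0 ih q' t h (w :: r)) l)
        (same q0 p0 s0 r0 ih q' l w r)
        (popK r fun h t => same q0 p0 s0 r0 ih q' (w :: l) h t) d) (T.get q s)) n

theorem same_sound {M : Tab} {q0 p0 s0 r0 k q l s r n z}
    (h : same q0 p0 s0 r0 k q l s r = true) (hb : Bad M n ⟨q, l ++ z, s, r⟩) :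
    (∃ z', Bad M n ⟨q0, p0 ++ z', s0, r0⟩) ∨ k q l s r = true := by
  simp only [same, oor_eq, aand_eq, Bool.or_eq_true, Bool.and_eq_true] at h
  rcases h with ⟨h1, h2, h3, h4⟩ | h
  · left
    obtain ⟨z', rfl⟩ := isPre_eq _ _ h4
    rw [stEq_eq h1, bEq_eq h2, listEq_eq _ _ h3, List.append_assoc] at hb
    exact ⟨_, hb⟩
  · exact Or.inr h

theorem walk_sound {T M : Tab} (hE : Extn T M) {q0 p0 s0 r0} (i : ℕ) :
    ∀ q l s r n z, walk T q0 p0 s0 r0 i q l s r = true → Bad M n ⟨q, l ++ z, s, r⟩ →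
      ∃ m < n, ∃ z', Bad M m ⟨q0, p0 ++ z', s0, r0⟩ := by
  induction i with
  | zero => intro q l s r n z h; cases h
  | succ i ih =>
    intro q l s r n z h hb
    have h0 : (Ent.rec false (fun q' w d =>
      Dir.rec (List.rec false (fun h t _ => same q0 p0 s0 r0 (walk T q0 p0 s0 r0 i)
          q' t h (w :: r)) l)
        (same q0 p0 s0 r0 (walk T q0 p0 s0 r0 i) q' l w r)
        (popK r fun h t => same q0 p0 s0 r0 (walk T q0 p0 s0 r0 i) q' (w :: l) h t) d)
        (T.get q s) : Bool) = true := h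
    have next : ∀ q' l' w r' n' , same q0 p0 s0 r0 (walk T q0 p0 s0 r0 i) q' l' w r' = true →
        Bad M n' ⟨q', l' ++ z, w, r'⟩ → ∃ m < n' + 1, ∃ z', Bad M m ⟨q0, p0 ++ z', s0, r0⟩ := by
      intro q' l' w r' n' h1 h2
      rcases same_sound h1 h2 with h3 | h3
      · exact ⟨n', by omega, h3⟩
      · obtain ⟨m, hm, h4⟩ := ih _ _ _ _ _ _ h3 h2
        exact ⟨m, by omega, h4⟩
    cases he : T.get q s with
    | u => rw [he] at h0; cases h0
    | t q' w d =>
      rw [he] at h0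
      have hg : M.get q s = .t q' w d := by rw [hE q s (by simp [he]), he]
      obtain ⟨n', rfl, hb'⟩ := hb.of_step hg
      cases d
      · cases l with
        | nil => cases h0
        | cons x l => exact next _ _ _ _ _ h0 hb'
      · exact next _ _ _ _ _ h0 hb'
      · have h1 : popK r (fun h t =>
          same q0 p0 s0 r0 (walk T q0 p0 s0 r0 i) q' (w :: l) h t) = true := h0
        rw [popK_eq] at h1
        exact next _ _ _ _ _ h1 hb'

noncomputable def take2K (l : List Bool) (k : List Bool → Bool) : Bool :=
  List.rec (k []) (fun x t _ => List.rec (k [x]) (fun y _ _ => k [x, y]) t) l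

theorem take2K_eq (l k) : take2K l k = k (l.take 2) := by
  rcases l with _ | ⟨x, _ | ⟨y, t⟩⟩ <;> rfl

noncomputable def recur (T : Tab) (q : St) (l : List Bool) (s : Bool) (r : List Bool) : Bool :=
  take2K l fun p => walk T q p s r 16 q p s r

theorem recur_sound {T M : Tab} (hE : Extn T M) {q l s r} (h : recur T q l s r = true) (n : ℕ) :
    ¬ Bad M n ⟨q, l, s, r⟩ := by
  unfold recur at h
  rw [take2K_eq] at h
  have key : ∀ n z, ¬ Bad M n ⟨q, l.take 2 ++ z, s, r⟩ := by
    intro n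
    induction n using Nat.strong_induction_on with
    | _ n ih =>
      intro z hb
      obtain ⟨m, hm, z', hb'⟩ := walk_sound hE _ _ _ _ _ _ _ h hb
      exact ih m hm z' hb'
  have := key n (l.drop 2)
  rwa [List.take_append_drop] at this

theorem Extn.mir {T M : Tab} (hE : Extn T M) : Extn T.mir M.mir := by
  intro q s h
  rw [Tab.mir_get] at h ⊢
  rw [Tab.mir_get, hE q s]
  intro h'
  rw [h'] at h
  exact h rfl

/-- Try all deciders. -/
noncomputable def decider (T : Tab) (q : St) (l : List Bool) (s : Bool) (r : List Bool) : Bool :=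
  oor (recur T q l s r) (oor (recur T.mir q r s l) (pdas T))

theorem decider_sound {T M : Tab} (hE : Extn T M) {q l s r} (h : decider T q l s r = true)
    {N n : ℕ} (hb : Bad M N LC.start) : ¬ Bad M n ⟨q, l, s, r⟩ := by
  intro hb'
  simp only [decider, oor_eq, Bool.or_eq_true] at h
  rcases h with h | h | h
  · exact recur_sound hE h _ hb'
  · exact recur_sound hE.mir h _ hb'.mir
  · exact pdas_sound h hE _ hb

/-! ### The list of machines and the search -/

def champions : List Tab := [
  ⟨.t .b true .left, .t .c true .right, .t .a true .right, .t .a false .stay, .t .b true .right, .u⟩,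
  ⟨.t .b true .left, .t .c true .right, .t .a true .right, .t .b true .left, .t .b true .right, .u⟩,
  ⟨.t .b true .left, .u, .t .c false .left, .t .a false .stay, .t .c true .right, .t .a true .right⟩,
  ⟨.t .b true .left, .u, .t .c false .left, .t .b true .left, .t .c true .right, .t .a true .right⟩,
  ⟨.t .b true .left, .t .c true .right, .t .c true .left, .u, .t .a true .right, .t .b false .right⟩,
  ⟨.t .b true .left, .t .c true .left, .t .c true .right, .u, .t .a true .left, .t .b false .right⟩,
  ⟨.t .b true .left, .t .a true .left, .t .c true .right, .u, .t .a true .left, .t .b true .right⟩,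
  ⟨.t .b true .left, .t .c false .stay, .t .c true .right, .u, .t .a true .left, .t .b true .right⟩,
  ⟨.t .b true .left, .t .a true .left, .t .c true .right, .u, .t .a true .stay, .t .b true .right⟩,
  ⟨.t .b true .stay, .t .c true .right, .t .a true .right, .t .b true .left, .t .b true .right, .u⟩,
  ⟨.t .b true .stay, .u, .t .c false .left, .t .b true .left, .t .c true .right, .t .a true .right⟩,
  ⟨.t .b true .stay, .t .c true .left, .t .a true .left, .t .b true .right, .t .b true .left, .u⟩,
  ⟨.t .b true .stay, .u, .t .c false .right, .t .b true .right, .t .c true .left, .t .a true .left⟩,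
  ⟨.t .b true .right, .t .c true .left, .t .a true .left, .t .a false .stay, .t .b true .left, .u⟩,
  ⟨.t .b true .right, .t .c true .left, .t .a true .left, .t .b true .right, .t .b true .left, .u⟩,
  ⟨.t .b true .right, .u, .t .c false .right, .t .a false .stay, .t .c true .left, .t .a true .left⟩,
  ⟨.t .b true .right, .u, .t .c false .right, .t .b true .right, .t .c true .left, .t .a true .left⟩,
  ⟨.t .b true .right, .t .c true .right, .t .c true .left, .u, .t .a true .right, .t .b false .left⟩,
  ⟨.t .b true .right, .t .a true .right, .t .c true .left, .u, .t .a true .stay, .t .b true .left⟩,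
  ⟨.t .b true .right, .t .a true .right, .t .c true .left, .u, .t .a true .right, .t .b true .left⟩,
  ⟨.t .b true .right, .t .c false .stay, .t .c true .left, .u, .t .a true .right, .t .b true .left⟩,
  ⟨.t .b true .right, .t .c true .left, .t .c true .right, .u, .t .a true .left, .t .b false .left⟩,
  ⟨.t .c true .left, .t .b true .right, .t .c true .right, .u, .t .a true .right, .t .a false .stay⟩,
  ⟨.t .c true .left, .t .b true .right, .t .c true .right, .u, .t .a true .right, .t .c true .left⟩,
  ⟨.t .c true .left, .u, .t .b true .right, .t .a true .right, .t .b false .left, .t .a false .stay⟩,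
  ⟨.t .c true .left, .u, .t .b true .right, .t .a true .right, .t .b false .left, .t .c true .left⟩,
  ⟨.t .c true .left, .t .b true .right, .t .a true .right, .t .c false .right, .t .b true .left, .u⟩,
  ⟨.t .c true .left, .t .b true .left, .t .a true .left, .t .c false .right, .t .b true .right, .u⟩,
  ⟨.t .c true .left, .t .a true .left, .t .a true .left, .t .c true .right, .t .b true .right, .u⟩,
  ⟨.t .c true .left, .t .b false .stay, .t .a true .left, .t .c true .right, .t .b true .right, .u⟩,
  ⟨.t .c true .left, .t .a true .left, .t .a true .stay, .t .c true .right, .t .b true .right, .u⟩,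
  ⟨.t .c true .stay, .t .b true .right, .t .c true .right, .u, .t .a true .right, .t .c true .left⟩,
  ⟨.t .c true .stay, .u, .t .b true .right, .t .a true .right, .t .b false .left, .t .c true .left⟩,
  ⟨.t .c true .stay, .t .b true .left, .t .c true .left, .u, .t .a true .left, .t .c true .right⟩,
  ⟨.t .c true .stay, .u, .t .b true .left, .t .a true .left, .t .b false .right, .t .c true .right⟩,
  ⟨.t .c true .right, .t .b true .left, .t .c true .left, .u, .t .a true .left, .t .a false .stay⟩,
  ⟨.t .c true .right, .t .b true .left, .t .c true .left, .u, .t .a true .left, .t .c true .right⟩,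
  ⟨.t .c true .right, .u, .t .b true .left, .t .a true .left, .t .b false .right, .t .a false .stay⟩,
  ⟨.t .c true .right, .u, .t .b true .left, .t .a true .left, .t .b false .right, .t .c true .right⟩,
  ⟨.t .c true .right, .t .b true .right, .t .a true .right, .t .c false .left, .t .b true .left, .u⟩,
  ⟨.t .c true .right, .t .a true .right, .t .a true .stay, .t .c true .left, .t .b true .left, .u⟩,
  ⟨.t .c true .right, .t .a true .right, .t .a true .right, .t .c true .left, .t .b true .left, .u⟩,
  ⟨.t .c true .right, .t .b false .stay, .t .a true .right, .t .c true .left, .t .b true .left, .u⟩,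
  ⟨.t .c true .right, .t .b true .left, .t .a true .left, .t .c false .left, .t .b true .right, .u⟩]

/-- All entries other than the given one are defined. -/
noncomputable def full (T : Tab) : Bool :=
  aand (T.get .a false).isDef <| aand (T.get .a true).isDef <|
  aand (T.get .b false).isDef <| aand (T.get .b true).isDef <|
  aand (T.get .c false).isDef (T.get .c true).isDef

theorem full_iff (T : Tab) : full T = true ↔ ∀ q s, T.get q s ≠ .u := by
  simp only [full, aand_eq, Bool.and_eq_true, Ent.isDef_iff]
  constructor
  · intro h q s; cases q <;> cases s <;> simp only [h, ne_eq, not_false_iff]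
  · intro h; simp [h]

noncomputable def allAct (p : Ent → Bool) : Bool :=
  let pd (q : St) (w : Bool) : Bool :=
    aand (p (.t q w .left)) (aand (p (.t q w .stay)) (p (.t q w .right)))
  aand (pd .a false) <| aand (pd .a true) <| aand (pd .b false) <| aand (pd .b true) <|
  aand (pd .c false) (pd .c true)

theorem allAct_spec {p : Ent → Bool} (h : allAct p = true) (q w d) : p (.t q w d) = true := by
  simp only [allAct, aand_eq, Bool.and_eq_true] at h
  cases q <;> cases w <;> cases d <;> simp only [h]

noncomputable def haltOk (T : Tab) (fl : Bool) (l : List Bool) (s : Bool) (r : List Bool) : Bool :=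
  iff' (Nat.beq (score l s r) 6) (aand fl (decide (T ∈ champions))) true

noncomputable def Tab.setK (T : Tab) (q : St) (s : Bool) (e : Ent) (k : Tab → Bool) : Bool :=
  Tab.rec (fun a0 a1 b0 b1 c0 c1 =>
    St.rec (Bool.rec (k ⟨e, a1, b0, b1, c0, c1⟩) (k ⟨a0, e, b0, b1, c0, c1⟩) s)
      (Bool.rec (k ⟨a0, a1, e, b1, c0, c1⟩) (k ⟨a0, a1, b0, e, c0, c1⟩) s)
      (Bool.rec (k ⟨a0, a1, b0, b1, e, c1⟩) (k ⟨a0, a1, b0, b1, c0, e⟩) s) q) T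

theorem Tab.setK_eq (T : Tab) (q : St) (s : Bool) (e : Ent) (k : Tab → Bool) :
    T.setK q s e k = k (T.set q s e) := by
  obtain ⟨a0, a1, b0, b1, c0, c1⟩ := T
  cases q <;> cases s <;> rfl

/-- A `stay` entry is only considered when the machine halts right after it. -/
noncomputable def stayOk (T : Tab) (q : St) (w : Bool) (l r : List Bool) : Bool :=
  Ent.rec (haltOk T (full (T.set q w (.t .a false .stay))) l w r) (fun _ _ _ => true) (T.get q w)

noncomputable def goStep (k : St → List Bool → Bool → List Bool → Bool) (st : Bool)
    (q' : St) (w : Bool) (d : Dir) (l r : List Bool) : Bool :=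
  Dir.rec (popK l fun h t => k q' t h (w :: r)) st
    (popK r fun h t => k q' (w :: l) h t) d

noncomputable def search (n : ℕ) : Tab → St → List Bool → Bool → List Bool → Bool :=
  Nat.rec (motive := fun _ => Tab → St → List Bool → Bool → List Bool → Bool)
    decider
    (fun _ ih T q l s r =>
      Ent.rec
        (iff' (full (T.set q s (.t .a false .stay)))
          (haltOk T true l s r)
          (aand (haltOk T false l s r)
            (allAct fun e => T.setK q s e fun T' =>
              oor (quick T') (Ent.rec false
                (fun q' w d => goStep (ih T') (stayOk T' q' w l r) q' w d l r) e))))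
        (fun q' w d => goStep (ih T) (ih T q' l w r) q' w d l r)
        (T.get q s)) n

noncomputable def T0 (e : Ent) : Tab := ⟨e, .u, .u, .u, .u, .u⟩

/-! ### Soundness of the search -/

theorem champ_unshort : ∀ M ∈ champions, ∀ q s q' w, M.get q' w = M.get q s →
    ¬ (q' = q ∧ w = s) → M.set q s (.t q' w .stay) ∈ champions := by
  have h : (champions.all fun M => [St.a, .b, .c].all fun q => [false, true].all fun s =>
      [St.a, .b, .c].all fun q' => [false, true].all fun w =>
        !(decide (M.get q' w = M.get q s)) || decide (q' = q ∧ w = s) ||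
          decide (M.set q s (.t q' w .stay) ∈ champions)) = true := by decide +kernel
  intro M hM q s q' w h1 h2
  have hs : ∀ q : St, q ∈ [St.a, .b, .c] := by intro q; cases q <;> simp
  have hb : ∀ q : Bool, q ∈ [false, true] := by intro q; cases q <;> simp
  simp only [List.all_eq_true] at h
  have := h M hM q (hs q) s (hb s) q' (hs q') w (hb w)
  simpa [h1, h2] using this

theorem stay_case {M : Tab} {N : ℕ} {q s q' w} (hg : M.get q s = .t q' w .stay)
    (hn : M.get q' w ≠ .u) (hv : Visits M q s LC.start) (hb : Bad M N LC.start)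
    (IH : ∀ m < N, ∀ M', Bad M' m LC.start → M' ∈ champions) : M ∈ champions := by
  cases he : M.get q' w with
  | u => exact absurd he hn
  | t q2 w2 d2 =>
    obtain ⟨m, hm, hb'⟩ := shortcut_strict hg he hv N hb
    have h1 := IH m hm _ hb'
    by_cases hc : q' = q ∧ w = s
    · have : M.set q s (.t q2 w2 d2) = M := by
        apply Tab.ext_get
        intro x y
        rw [Tab.get_set]
        split
        · rename_i h; rw [h.1, h.2, ← he, hc.1, hc.2]
        · rfl
      rwa [this] at h1
    · have h2 := champ_unshort _ h1 q s q' w (by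
        rw [Tab.get_set, Tab.get_set, if_neg hc, if_pos ⟨rfl, rfl⟩, he]) hc
      have : (M.set q s (.t q2 w2 d2)).set q s (.t q' w .stay) = M := by
        apply Tab.ext_get
        intro x y
        rw [Tab.get_set, Tab.get_set]
        split
        · rename_i h; rw [h.1, h.2, hg]
        · rfl
      rwa [this] at h2

theorem haltOk_sound {T : Tab} {fl l s r} (h : haltOk T fl l s r = true) (h6 : score l s r = 6) :
    fl = true ∧ T ∈ champions := by
  simpa [haltOk, h6] using h

theorem eq_of_full {T M : Tab} {q s} (hE : Extn T M) (hT : T.get q s = .u) (hM : M.get q s = .u)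
    (hf : full (T.set q s (.t .a false .stay)) = true) : T = M := by
  rw [full_iff] at hf
  apply Tab.ext_get
  intro x y
  by_cases hc : x = q ∧ y = s
  · rw [hc.1, hc.2, hT, hM]
  · have := hf x y
    rw [Tab.get_set, if_neg hc] at this
    exact (hE x y this).symm

theorem Extn.set {T M : Tab} {q s e} (hE : Extn T M) (h : M.get q s = e) :
    Extn (T.set q s e) M := by
  intro x y hxy
  rw [Tab.get_set] at hxy ⊢
  split
  · rename_i hc; rw [hc.1, hc.2, h]
  · rename_i hc; rw [if_neg hc] at hxy; exact hE x y hxy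

theorem goStep_eq (k st q' w d l r) : goStep k st q' w d l r =
    match d with
    | .left => k q' (tl l) (hd l) (w :: r)
    | .stay => st
    | .right => k q' (w :: l) (hd r) (tl r) := by
  cases d
  · cases l <;> rfl
  · rfl
  · cases r <;> rfl

theorem search_sound {M : Tab} {N : ℕ} (hb : Bad M N LC.start)
    (IH : ∀ m < N, ∀ M', Bad M' m LC.start → M' ∈ champions) (n : ℕ) :
    ∀ (T : Tab) (c : LC) (j : ℕ), search n T c.q c.l c.s c.r = true → Extn T M →
      (∀ q s, Visits M q s c → Visits M q s LC.start) → Bad M j c → M ∈ champions := by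
  induction n with
  | zero =>
    intro T c j h hE hv hj
    exact absurd hj (decider_sound hE h hb)
  | succ n ih =>
    rintro T ⟨q, l, s, r⟩ j h hE hv hj
    simp only at h
    have hstep : ∀ q' w d, M.get q s = .t q' w d → ∀ x y,
        Visits M x y (mv q' w d ⟨q, l, s, r⟩) → Visits M x y LC.start :=
      fun q' w d hg x y hvis => hv x y (Visits.step hg hvis)
    have h0 : (Ent.rec
        (iff' (full (T.set q s (.t .a false .stay)))
          (haltOk T true l s r)
          (aand (haltOk T false l s r)
            (allAct fun e => T.setK q s e fun T' =>
              oor (quick T') (Ent.rec false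
                (fun q' w d => goStep (search n T') (stayOk T' q' w l r) q' w d l r) e))))
        (fun q' w d => goStep (search n T) (search n T q' l w r) q' w d l r)
        (T.get q s) : Bool) = true := h
    cases he : T.get q s with
    | t q' w d =>
      rw [he] at h0
      have hg : M.get q s = .t q' w d := by rw [hE q s (by simp [he]), he]
      obtain ⟨m, rfl, hb'⟩ := hj.of_step hg
      have hs := hstep q' w d hg
      replace h0 : goStep (search n T) (search n T q' l w r) q' w d l r = true := h0
      rw [goStep_eq] at h0
      cases d <;> exact ih T _ m h0 hE hs hb'
    | u =>
      rw [he] at h0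
      replace h0 : iff' (full (T.set q s (.t .a false .stay)))
          (haltOk T true l s r)
          (aand (haltOk T false l s r)
            (allAct fun e => T.setK q s e fun T' =>
              oor (quick T') (Ent.rec false
                (fun q' w d => goStep (search n T') (stayOk T' q' w l r) q' w d l r) e)))
          = true := h0
      rw [iff'_eq] at h0
      cases hg : M.get q s with
      | u =>
        have h6 : score l s r = 6 := hj.of_halt hg
        split at h0
        · rename_i hf
          rw [← eq_of_full hE he hg hf]
          exact (haltOk_sound h0 h6).2
        · rw [aand_eq, Bool.and_eq_true] at h0
          exact absurd (haltOk_sound h0.1 h6).1 (by simp)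
      | t q' w d =>
        split at h0
        · rename_i hf
          exfalso
          rw [full_iff] at hf
          refine not_bad_of_inv (fun _ => True) ?_ trivial hb
          rintro ⟨q1, l1, s1, r1⟩ -
          simp only
          cases hx : M.get q1 s1 with
          | t q2 w2 d2 => exact ⟨q2, w2, d2, rfl, trivial⟩
          | u =>
            exfalso
            by_cases hc : q1 = q ∧ s1 = s
            · rw [hc.1, hc.2, hg] at hx; cases hx
            · have := hf q1 s1
              rw [Tab.get_set, if_neg hc] at this
              rw [hE _ _ this] at hx
              exact this hx
        · rw [aand_eq, Bool.and_eq_true] at h0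
          have h1 := allAct_spec h0.2 q' w d
          rw [Tab.setK_eq, oor_eq, Bool.or_eq_true] at h1
          have hE' := hE.set hg
          rcases h1 with h1 | h1
          · exact absurd hb (quick_sound h1 hE' _)
          · replace h1 : goStep (search n (T.set q s (.t q' w d)))
              (stayOk (T.set q s (.t q' w d)) q' w l r) q' w d l r = true := h1
            rw [goStep_eq] at h1
            obtain ⟨m, rfl, hb'⟩ := hj.of_step hg
            have hs := hstep q' w d hg
            cases d
            · exact ih _ _ m h1 hE' hs hb'
            · by_cases hu : M.get q' w = .u
              · replace h1 : stayOk (T.set q s (.t q' w .stay)) q' w l r = true := h1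
                have hTu : (T.set q s (.t q' w .stay)).get q' w = .u := by
                  by_contra hne
                  exact hne ((hE' q' w hne).symm.trans hu)
                unfold stayOk at h1
                rw [hTu] at h1
                have h6 : score l w r = 6 := hb'.of_halt hu
                obtain ⟨h2, h3⟩ := haltOk_sound h1 h6
                rwa [eq_of_full hE' hTu hu h2] at h3
              · exact stay_case hg hu (hv _ _ (Visits.here rfl rfl)) hb IH
            · exact ih _ _ m h1 hE' hs hb'

theorem champ_mir : ∀ M ∈ champions, M.mir ∈ champions := by
  have h : (champions.all fun M => decide (M.mir ∈ champions)) = true := by decide +kernel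
  intro M hM
  simpa using List.all_eq_true.mp h M hM

theorem champ_swp : ∀ M ∈ champions, M.swp ∈ champions := by
  have h : (champions.all fun M => decide (M.swp ∈ champions)) = true := by decide +kernel
  intro M hM
  simpa using List.all_eq_true.mp h M hM

theorem root_a0 : search 23 (T0 (.t .a false .right)) .a [false] false [] = true := by
  decide +kernel
theorem root_a1 : search 23 (T0 (.t .a true .right)) .a [true] false [] = true := by
  decide +kernel
theorem root_b0 : search 23 (T0 (.t .b false .right)) .b [false] false [] = true := by
  decide +kernel
theorem root_b1 : search 23 (T0 (.t .b true .right)) .b [true] false [] = true := by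
  decide +kernel

theorem champ_complete (N : ℕ) : ∀ M, Bad M N LC.start → M ∈ champions := by
  induction N using Nat.strong_induction_on with
  | _ N IH =>
    have right_ab : ∀ M q w, q ≠ .c → M.get .a false = .t q w .right → Bad M N LC.start →
        M ∈ champions := by
      intro M q w hq hg hb
      obtain ⟨m, hm, hb'⟩ := hb.of_step hg
      have hE : Extn (T0 (.t q w .right)) M := by
        intro x y hxy
        cases x <;> cases y <;> first | exact hg | exact absurd rfl hxy
      refine search_sound hb IH 23 (T0 (.t q w .right)) ⟨q, [w], false, []⟩ m ?_ hE
        (fun x y hv => Visits.step hg hv) hb'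
      cases q
      · cases w
        · exact root_a0
        · exact root_a1
      · cases w
        · exact root_b0
        · exact root_b1
      · exact absurd rfl hq
    have right : ∀ M q w, M.get .a false = .t q w .right → Bad M N LC.start →
        M ∈ champions := by
      intro M q w hg hb
      by_cases hq : q = .c
      · subst hq
        have h1 := right_ab M.swp .b w (by simp) (by
          have := Tab.swp_get M .a false
          rw [hg] at this; exact this) hb.swp
        have := champ_swp _ h1
        rwa [Tab.swp_swp] at this
      · exact right_ab M q w hq hg hb
    intro M hb
    cases hg : M.get .a false with
    | u =>
      have h6 : score [] false [] = 6 := hb.of_halt hg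
      rw [score_eq] at h6
      exact absurd h6 (by decide)
    | t q w d =>
      cases d
      · have h1 := right M.mir q w (by rw [Tab.mir_get, hg]; rfl) hb.mir
        have := champ_mir _ h1
        rwa [Tab.mir_mir] at this
      · by_cases hu : M.get q w = .u
        · obtain ⟨m, rfl, hb'⟩ := hb.of_step hg
          have h6 : score [] w [] = 6 := hb'.of_halt hu
          rw [score_eq] at h6
          exact absurd h6 (by cases w <;> decide)
        · exact stay_case hg hu (Visits.here rfl rfl) hb IH
      · exact right M q w hg hb

/-! ### The listed machines do halt with six ones -/

noncomputable def runBad (M : Tab) (n : ℕ) : LC → Bool :=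
  Nat.rec (motive := fun _ => LC → Bool) (fun _ => false)
    (fun _ ih c => Ent.rec (Nat.beq (score c.l c.s c.r) 6)
      (fun q' w d => ih (mv q' w d c)) (M.get c.q c.s)) n

theorem runBad_sound {M : Tab} (n : ℕ) : ∀ c, runBad M n c = true → ∃ m, Bad M m c := by
  induction n with
  | zero => intro c h; exact absurd h (by simp [runBad])
  | succ n ih =>
    intro c h
    have h0 : (Ent.rec (Nat.beq (score c.l c.s c.r) 6)
      (fun q' w d => runBad M n (mv q' w d c)) (M.get c.q c.s) : Bool) = true := h
    cases hg : M.get c.q c.s with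
    | u =>
      rw [hg] at h0
      exact ⟨0, Bad.halt hg (Nat.eq_of_beq_eq_true h0)⟩
    | t q' w d =>
      rw [hg] at h0
      obtain ⟨m, hm⟩ := ih _ h0
      exact ⟨m + 1, Bad.step hg hm⟩

theorem champ_sound : ∀ M ∈ champions, ∃ m, Bad M m LC.start := by
  have h : (champions.all fun M => runBad M 30 LC.start) = true := by decide +kernel
  intro M hM
  exact runBad_sound 30 _ (List.all_eq_true.mp h M hM)

theorem mem_champions_iff (M : Tab) : M ∈ champions ↔ ∃ m, Bad M m LC.start :=
  ⟨champ_sound M, fun ⟨m, h⟩ => champ_complete m M h⟩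

/-! ### Translation to the machines of the statement -/

def St.toF : St → Fin 3
  | .a => 0
  | .b => 1
  | .c => 2

def St.ofF (q : Fin 3) : St := if q = 0 then .a else if q = 1 then .b else .c

theorem St.ofF_toF (q : St) : St.ofF q.toF = q := by cases q <;> rfl
theorem St.toF_ofF (q : Fin 3) : (St.ofF q).toF = q := by revert q; decide

def Ent.toO : Ent → Option (Fin 3 × Bool × Dir)
  | .u => none
  | .t q w d => some (q.toF, w, d)

def Ent.ofO : Option (Fin 3 × Bool × Dir) → Ent
  | none => .u
  | some (q, w, d) => .t (St.ofF q) w d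

theorem Ent.ofO_toO (e : Ent) : Ent.ofO e.toO = e := by
  rcases e with _ | ⟨q, w, d⟩
  · rfl
  · simp [Ent.toO, Ent.ofO, St.ofF_toF]

theorem Ent.toO_ofO (e) : (Ent.ofO e).toO = e := by
  rcases e with _ | ⟨q, w, d⟩
  · rfl
  · simp [Ent.toO, Ent.ofO, St.toF_ofF]

noncomputable def Tab.toF (T : Tab) : Fin 3 × Bool → Option (Fin 3 × Bool × Dir) :=
  fun x => (T.get (St.ofF x.1) x.2).toO

def Tab.ofF (f : Fin 3 × Bool → Option (Fin 3 × Bool × Dir)) : Tab :=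
  ⟨.ofO (f (0, false)), .ofO (f (0, true)), .ofO (f (1, false)), .ofO (f (1, true)),
   .ofO (f (2, false)), .ofO (f (2, true))⟩

theorem Tab.ofF_toF (T : Tab) : Tab.ofF T.toF = T := by
  obtain ⟨a0, a1, b0, b1, c0, c1⟩ := T
  show (⟨.ofO a0.toO, .ofO a1.toO, .ofO b0.toO, .ofO b1.toO, .ofO c0.toO, .ofO c1.toO⟩ : Tab) = _
  simp only [Ent.ofO_toO]

theorem Tab.toF_ofF (f) : (Tab.ofF f).toF = f := by
  funext ⟨q, s⟩
  have : (Tab.ofF f).get (St.ofF q) s = .ofO (f (q, s)) := by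
    fin_cases q <;> cases s <;> rfl
  simp only [Tab.toF, this, Ent.toO_ofO]

/-- The list configuration `x` represents `c`. -/
structure TapeRep (c : Cfg (Fin 3)) (x : LC) : Prop where
  st : c.state = x.q.toF
  hs : c.tape c.head = x.s
  hl : ∀ k : ℕ, c.tape (c.head - 1 - k) = x.l.getD k false
  hr : ∀ k : ℕ, c.tape (c.head + 1 + k) = x.r.getD k false

theorem getD_hd (l : List Bool) : l.getD 0 false = hd l := by cases l <;> rfl
theorem getD_tl (l : List Bool) (k : ℕ) : l.getD (k + 1) false = (tl l).getD k false := by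
  cases l <;> simp

theorem TapeRep.mv {c x} (h : TapeRep c x) (q' : St) (w : Bool) (d : Dir) :
    TapeRep ⟨q'.toF, c.head + d.move, Function.update c.tape c.head w⟩ (mv q' w d x) := by
  obtain ⟨st, hs, hl, hr⟩ := h
  cases d
  · refine ⟨rfl, ?_, ?_, ?_⟩
    · show Function.update c.tape c.head w (c.head + -1) = hd x.l
      rw [Function.update_of_ne (by omega), ← getD_hd, ← hl 0]
      congr 1; push_cast; ring
    · intro k
      show Function.update c.tape c.head w (c.head + -1 - 1 - k) = (tl x.l).getD k false
      rw [Function.update_of_ne (by omega), ← getD_tl, ← hl (k + 1)]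
      congr 1; push_cast; ring
    · intro k
      show Function.update c.tape c.head w (c.head + -1 + 1 + k) = (w :: x.r).getD k false
      cases k with
      | zero => simp
      | succ k =>
        rw [Function.update_of_ne (by push_cast; omega), List.getD_cons_succ, ← hr k]
        congr 1; push_cast; ring
  · refine ⟨rfl, ?_, ?_, ?_⟩
    · show Function.update c.tape c.head w (c.head + 0) = w
      simp
    · intro k
      show Function.update c.tape c.head w (c.head + 0 - 1 - k) = x.l.getD k false
      rw [Function.update_of_ne (by omega), ← hl k]
      congr 1; ring
    · intro k
      show Function.update c.tape c.head w (c.head + 0 + 1 + k) = x.r.getD k false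
      rw [Function.update_of_ne (by omega), ← hr k]
      congr 1; ring
  · refine ⟨rfl, ?_, ?_, ?_⟩
    · show Function.update c.tape c.head w (c.head + 1) = hd x.r
      rw [Function.update_of_ne (by omega), ← getD_hd, ← hr 0]
      congr 1; push_cast; ring
    · intro k
      show Function.update c.tape c.head w (c.head + 1 - 1 - k) = (w :: x.l).getD k false
      cases k with
      | zero => simp
      | succ k =>
        rw [Function.update_of_ne (by push_cast; omega), List.getD_cons_succ, ← hl k]
        congr 1; push_cast; ring
    · intro k
      show Function.update c.tape c.head w (c.head + 1 + 1 + k) = (tl x.r).getD k false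
      rw [Function.update_of_ne (by omega), ← getD_tl, ← hr (k + 1)]
      congr 1; push_cast; ring

/-- The word `u` written at position `i` contains all ones of the tape. -/
def WordAt (tape : ℤ → Bool) (i : ℤ) (u : List Bool) : Prop :=
  (∀ k : ℕ, k < u.length → u.getD k false = tape (i + k)) ∧
  (∀ j : ℤ, tape j = true → i ≤ j ∧ j < i + u.length)

theorem WordAt.card {u : List Bool} : ∀ {tape : ℤ → Bool} {i : ℤ}, WordAt tape i u →
    {j | tape j = true}.Finite ∧ {j | tape j = true}.ncard = u.count true := by
  induction u with
  | nil =>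
    intro tape i h
    have : {j | tape j = true} = ∅ := by
      ext j
      simp only [Set.mem_ofPred_eq, Set.mem_empty_iff_false, iff_false]
      intro hj
      have := h.2 j hj
      simp at this
      omega
    rw [this]; simp
  | cons x u ih =>
    intro tape i h
    have hi : tape i = x := by
      have := h.1 0 (by simp)
      simpa using this.symm
    have h' : WordAt (Function.update tape i false) (i + 1) u := by
      constructor
      · intro k hk
        have := h.1 (k + 1) (by simp; omega)
        rw [List.getD_cons_succ] at this
        rw [this, Function.update_of_ne (by omega)]
        congr 1; push_cast; ring
      · intro j hj
        have hji : j ≠ i := by rintro rfl; simp at hj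
        rw [Function.update_of_ne hji] at hj
        have := h.2 j hj
        simp only [List.length_cons] at this
        push_cast at this
        omega
    obtain ⟨h1, h2⟩ := ih h'
    cases x
    · have : Function.update tape i false = tape := by
        rw [← hi]; exact Function.update_eq_self i tape
      rw [this] at h1 h2
      exact ⟨h1, by rw [h2]; simp⟩
    · have hset : {j | tape j = true} = insert i {j | Function.update tape i false j = true} := by
        ext j
        by_cases hj : j = i
        · subst hj; simp [hi]
        · simp [hj]
      have hni : i ∉ {j | Function.update tape i false j = true} := by simp
      rw [hset]
      refine ⟨h1.insert i, ?_⟩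
      rw [Set.ncard_insert_of_notMem hni h1, h2]; simp

theorem WordAt.tapeWord {tape : ℤ → Bool} : ∀ (n : ℕ) {i : ℤ} {u : List Bool}, u.length ≤ n →
    WordAt tape i u → ∃ w, TapeWord tape w := by
  intro n
  induction n with
  | zero =>
    intro i u hn h
    have : u = [] := List.length_eq_zero_iff.mp (by omega)
    subst this
    exact ⟨[], i, h.1, h.2, fun h => absurd rfl h⟩
  | succ n ih =>
    intro i u hn h
    by_cases hu : u = []
    · subst hu
      exact ⟨[], i, h.1, h.2, fun h => absurd rfl h⟩
    by_cases h0 : u.getD 0 false = true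
    · by_cases h1 : u.getLastD false = true
      · exact ⟨u, i, h.1, h.2, fun _ => ⟨h0, h1⟩⟩
      · obtain ⟨v, x, rfl⟩ : ∃ v x, u = v ++ [x] :=
          ⟨u.dropLast, u.getLast hu, (List.dropLast_append_getLast hu).symm⟩
        have hx : x = false := by simpa using h1
        subst hx
        refine ih (i := i) (u := v) (by simp at hn; omega) ⟨?_, ?_⟩
        · intro k hk
          rw [← h.1 k (by simp; omega), List.getD_append _ _ _ _ hk]
        · intro j hj
          have h2 := h.2 j hj
          refine ⟨h2.1, ?_⟩
          by_contra hlt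
          have hj' : j = i + v.length := by
            have := h2.2
            simp at this
            omega
          have := h.1 v.length (by simp)
          rw [← hj', hj] at this
          simp at this
    · cases u with
      | nil => exact absurd rfl hu
      | cons x v =>
        have hx : x = false := by simpa using h0
        subst hx
        refine ih (i := i + 1) (u := v) (by simp at hn; omega) ⟨?_, ?_⟩
        · intro k hk
          have := h.1 (k + 1) (by simp; omega)
          rw [List.getD_cons_succ] at this
          rw [this]
          congr 1; push_cast; ring
        · intro j hj
          have h2 := h.2 j hj
          simp only [List.length_cons] at h2
          push_cast at h2
          have hne : j ≠ i := by
            rintro rfl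
            have := h.1 0 (by simp)
            simp [hj] at this
          omega

theorem TapeRep.wordAt {c x} (h : TapeRep c x) :
    WordAt c.tape (c.head - x.l.length) (x.l.reverse ++ x.s :: x.r) := by
  obtain ⟨st, hs, hl, hr⟩ := h
  constructor
  · intro k hk
    simp only [List.length_append, List.length_reverse, List.length_cons] at hk
    rcases lt_trichotomy k x.l.length with h | h | h
    · rw [List.getD_append _ _ _ _ (by simpa using h), List.getD_eq_getElem _ _ (by simpa using h),
        List.getElem_reverse, ← List.getD_eq_getElem _ false, ← hl]
      congr 1; omega
    · subst h
      rw [List.getD_append_right _ _ _ _ (by simp)]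
      simp [hs]
    · rw [List.getD_append_right _ _ _ _ (by simp; omega)]
      obtain ⟨m, rfl⟩ : ∃ m, k = x.l.length + 1 + m := ⟨k - (x.l.length + 1), by omega⟩
      rw [show x.l.length + 1 + m - x.l.reverse.length = m + 1 by simp; omega,
        List.getD_cons_succ, ← hr]
      congr 1; push_cast; ring
  · intro j hj
    simp only [List.length_append, List.length_reverse, List.length_cons]
    push_cast
    constructor
    · by_contra hlt
      obtain ⟨k, hk⟩ : ∃ k : ℕ, j = c.head - 1 - k := ⟨(c.head - 1 - j).toNat, by omega⟩
      rw [hk, hl, List.getD_eq_default _ _ (by omega)] at hj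
      simp at hj
    · by_contra hlt
      obtain ⟨k, hk⟩ : ∃ k : ℕ, j = c.head + 1 + k := ⟨(j - c.head - 1).toNat, by omega⟩
      rw [hk, hr, List.getD_eq_default _ _ (by omega)] at hj
      simp at hj

theorem count_word (x : LC) : (x.l.reverse ++ x.s :: x.r).count true = score x.l x.s x.r := by
  rw [score_eq, List.count_append, List.count_reverse]

theorem TapeRep.get {c x} (h : TapeRep c x) (M : Tab) :
    M.toF (c.state, c.tape c.head) = (M.get x.q x.s).toO := by
  simp only [Tab.toF, h.st, h.hs, St.ofF_toF]

theorem bad_iff (M : Tab) (t : ℕ) : ∀ c x, TapeRep c x → (Bad M t x ↔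
    ∃ w, (∃ c', stepsTM M.toF t c = some c' ∧ Halted M.toF c' ∧ TapeWord c'.tape w) ∧
      w.count true = 6) := by
  induction t with
  | zero =>
    intro c x h
    have hg := h.get M
    constructor
    · intro hb
      cases hb with
      | halt h1 h2 =>
        obtain ⟨w, hw⟩ := h.wordAt.tapeWord _ le_rfl
        refine ⟨w, ⟨c, rfl, ?_, hw⟩, ?_⟩
        · rw [h1] at hg; exact hg
        · obtain ⟨i, hw1, hw2, _⟩ := hw
          rw [← (WordAt.card ⟨hw1, hw2⟩).2, h.wordAt.card.2, count_word, h2]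
    · rintro ⟨w, ⟨c', h1, h2, ⟨i, hw1, hw2, _⟩⟩, h6⟩
      cases h1
      refine Bad.halt ?_ ?_
      · have h3 : (M.get x.q x.s).toO = none := hg.symm.trans h2
        cases he : M.get x.q x.s with
        | u => rfl
        | t q w d => rw [he] at h3; cases h3
      · rw [← count_word, ← h.wordAt.card.2, (WordAt.card ⟨hw1, hw2⟩).2, h6]
  | succ t ih =>
    intro c x h
    have hg := h.get M
    cases he : M.get x.q x.s with
    | u =>
      rw [he] at hg
      have hst : stepsTM M.toF (t + 1) c = none := by
        simp [stepsTM, stepTM, hg, Ent.toO]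
      constructor
      · intro hb
        cases hb with
        | step h1 h2 => rw [he] at h1; cases h1
      · rintro ⟨w, ⟨c', h1, _⟩, _⟩
        rw [hst] at h1; cases h1
    | t q' w d =>
      rw [he] at hg
      have hst : stepsTM M.toF (t + 1) c = stepsTM M.toF t
          ⟨q'.toF, c.head + d.move, Function.update c.tape c.head w⟩ := by
        simp [stepsTM, stepTM, hg, Ent.toO]
      rw [hst, ← ih _ _ (h.mv q' w d)]
      constructor
      · intro hb
        obtain ⟨m, hm, hb'⟩ := hb.of_step he
        cases hm
        exact hb'
      · intro hb
        exact Bad.step he hb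

theorem rep_init : TapeRep (initCfg (0 : Fin 3)) LC.start :=
  ⟨rfl, rfl, fun _ => rfl, fun _ => rfl⟩

theorem toF_mem_iff (M : Tab) : (∃ (w : List Bool) (t : ℕ), Computes M.toF 0 w t ∧
    w.count true = 6) ↔ M ∈ champions := by
  rw [mem_champions_iff]
  constructor
  · rintro ⟨w, t, h, h6⟩
    exact ⟨t, (bad_iff M t _ _ rep_init).mpr ⟨w, h, h6⟩⟩
  · rintro ⟨t, h⟩
    obtain ⟨w, h1, h6⟩ := (bad_iff M t _ _ rep_init).mp h
    exact ⟨w, t, h1, h6⟩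

theorem champions_nodup : champions.Nodup := by decide +kernel

/-- Card(M_BB(3)) = 44: there are exactly 44 Turing machines
with at most 3 states (identified with their transition functions on the
state set Fin 3) that halt on the all-zero tape with a computed word
containing exactly BB(3) = 6 ones. -/
theorem card_busy_beaver_machines_3 :
    {f : Fin 3 × Bool → Option (Fin 3 × Bool × Dir) |
        ∃ (w : List Bool) (t : ℕ), Computes f 0 w t ∧ w.count true = 6}.ncard
      = 44 := by
  have hset : {f : Fin 3 × Bool → Option (Fin 3 × Bool × Dir) |
        ∃ (w : List Bool) (t : ℕ), Computes f 0 w t ∧ w.count true = 6}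
      = Tab.toF '' (champions.toFinset : Set Tab) := by
    ext f
    simp only [Set.mem_ofPred_eq, Set.mem_image, Finset.mem_coe, List.mem_toFinset]
    constructor
    · intro h
      refine ⟨Tab.ofF f, ?_, Tab.toF_ofF f⟩
      rw [← toF_mem_iff, Tab.toF_ofF]
      exact h
    · rintro ⟨M, hM, rfl⟩
      exact (toF_mem_iff M).mpr hM
  have hinj : Function.Injective Tab.toF :=
    Function.LeftInverse.injective Tab.ofF_toF
  rw [hset, Set.ncard_image_of_injective _ hinj, Set.ncard_coe_finset,
    List.toFinset_card_of_nodup champions_nodup]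
  rfl
end
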